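/- arXiv:0807.3890 — 5 statements merged into one kernel-verified Lean document; each statement's English description precedes it below -/
import Mathlib

section
/- Let H be a Hopf monoid in a braided monoidal category C and δ a character of H, with δ-twisted antipode S̃. Then S̃ ∘ m = m ∘ ψ_{H,H} ∘ (S̃ ⊗ S̃) and S̃ ∘ m = m ∘ (S̃ ⊗ S̃) ∘ ψ_{H,H} as morphisms H ⊗ H → H. -/
open CategoryTheory MonoidalCategory

universe v u

/-- A Hopf algebra object (a "braided Hopf algebra") in a braided monoidal category `C`,
consisting of an object `X` with multiplication `mul`, unit `one`, comultiplication
`comul`, counit `counit` and antipode `antipode`, satisfying the usual axioms, with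
the compatibility of `mul` and `comul` expressed via the braiding. -/
structure HopfObj (C : Type u) [Category.{v} C] [MonoidalCategory C]
    [BraidedCategory C] where
  X : C
  mul : X ⊗ X ⟶ X
  one : 𝟙_ C ⟶ X
  comul : X ⟶ X ⊗ X
  counit : X ⟶ 𝟙_ C
  antipode : X ⟶ X
  mul_assoc : (mul ▷ X) ≫ mul = (α_ X X X).hom ≫ (X ◁ mul) ≫ mul
  one_mul : (one ▷ X) ≫ mul = (λ_ X).hom
  mul_one : (X ◁ one) ≫ mul = (ρ_ X).hom
  comul_assoc : comul ≫ (comul ▷ X) ≫ (α_ X X X).hom = comul ≫ (X ◁ comul)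
  counit_comul : comul ≫ (counit ▷ X) = (λ_ X).inv
  comul_counit : comul ≫ (X ◁ counit) = (ρ_ X).inv
  mul_comul : mul ≫ comul =
      (comul ⊗ₘ comul) ≫ (α_ X X (X ⊗ X)).hom ≫ (X ◁ (α_ X X X).inv) ≫
        (X ◁ ((β_ X X).hom ▷ X)) ≫ (X ◁ (α_ X X X).hom) ≫
        (α_ X X (X ⊗ X)).inv ≫ (mul ⊗ₘ mul)
  one_comul : one ≫ comul = (λ_ (𝟙_ C)).inv ≫ (one ⊗ₘ one)
  mul_counit : mul ≫ counit = (counit ⊗ₘ counit) ≫ (λ_ (𝟙_ C)).hom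
  one_counit : one ≫ counit = 𝟙 (𝟙_ C)
  antipode_left : comul ≫ (antipode ▷ X) ≫ mul = counit ≫ one
  antipode_right : comul ≫ (X ◁ antipode) ≫ mul = counit ≫ one

variable {C : Type u} [Category.{v} C] [MonoidalCategory C] [BraidedCategory C]

/-- The `δ`-twisted antipode `S̃ = λ_H ∘ (δ ⊗ S) ∘ Δ`. -/
def HopfObj.twist (A : _root_.HopfObj C) (δ : A.X ⟶ 𝟙_ C) : A.X ⟶ A.X :=
  A.comul ≫ (δ ⊗ₘ A.antipode) ≫ (λ_ A.X).hom

/-- `δ : H ⟶ 𝟙` is a character, i.e. a morphism of monoid objects. -/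
def HopfObj.IsCharacter (A : _root_.HopfObj C) (δ : A.X ⟶ 𝟙_ C) : Prop :=
  A.mul ≫ δ = (δ ⊗ₘ δ) ≫ (λ_ (𝟙_ C)).hom ∧ A.one ≫ δ = 𝟙 (𝟙_ C)

/-- `σ : 𝟙 ⟶ H` is a cocharacter, i.e. a morphism of comonoid objects. -/
def HopfObj.IsCocharacter (A : _root_.HopfObj C) (σ : 𝟙_ C ⟶ A.X) : Prop :=
  σ ≫ A.comul = (λ_ (𝟙_ C)).inv ≫ (σ ⊗ₘ σ) ∧ σ ≫ A.counit = 𝟙 (𝟙_ C)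

/-- The morphism `m ∘ (m ⊗ 1_H) ∘ ((S ∘ σ) ⊗ (S̃ ∘ S̃) ⊗ σ) : H ⟶ H`
(with unitors inserted). -/
def HopfObj.bmpiMap (A : _root_.HopfObj C) (δ : A.X ⟶ 𝟙_ C) (σ : 𝟙_ C ⟶ A.X) :
    A.X ⟶ A.X :=
  (λ_ A.X).inv ≫ ((σ ≫ A.antipode) ⊗ₘ (A.twist δ ≫ A.twist δ)) ≫
    (ρ_ (A.X ⊗ A.X)).inv ≫ ((A.X ⊗ A.X) ◁ σ) ≫ (A.mul ▷ A.X) ≫ A.mul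

/-- `(δ, σ)` is a braided modular pair in involution. -/
def HopfObj.IsBMPI (A : _root_.HopfObj C) (δ : A.X ⟶ 𝟙_ C) (σ : 𝟙_ C ⟶ A.X) : Prop :=
  σ ≫ δ = 𝟙 (𝟙_ C) ∧ A.bmpiMap δ σ = 𝟙 A.X

/-! The twisted antipode is the convolution `δ ⋆ S`. Since `Δ` is multiplicative for the braided
product `(m ⊗ m) ∘ (1 ⊗ ψ ⊗ 1)` on `H ⊗ H`, convolving with a multiplicative functional preserves
any relation `f ∘ m = m' ∘ (f ⊗ f)`: the braiding only ever carries a factor past the unit object,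
where it is trivial. The antipode satisfies such a relation with `m' = m ∘ ψ`. -/

open scoped MonObj ComonObj

/-- The Hopf monoid, in the sense of Mathlib, underlying a `HopfObj`. -/
instance HopfObj.instHopfObj (A : _root_.HopfObj C) : CategoryTheory.HopfObj A.X where
  one := A.one
  mul := A.mul
  one_mul := A.one_mul
  mul_one := A.mul_one
  mul_assoc := A.mul_assoc
  counit := A.counit
  comul := A.comul
  counit_comul := A.counit_comul
  comul_counit := A.comul_counit
  comul_assoc := A.comul_assoc.symm
  mul_comul := by simpa only [tensorμ, Category.assoc] using A.mul_comul
  one_comul := A.one_comul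
  mul_counit := A.mul_counit
  one_counit := A.one_counit
  antipode := A.antipode
  antipode_left := A.antipode_left
  antipode_right := A.antipode_right

/-- The convolution `δ ⋆ f` of a functional `δ` on a comonoid with a morphism `f` out of it,
landing in the target of `f` via the left unitor. The `δ`-twisted antipode is `δ ⋆ S`. -/
def functionalConv {X Y : C} [ComonObj X] (δ : X ⟶ 𝟙_ C) (f : X ⟶ Y) : X ⟶ Y :=
  Δ[X] ≫ (δ ⊗ₘ f) ≫ (λ_ Y).hom

theorem HopfObj.twist_eq_functionalConv (A : _root_.HopfObj C) (δ : A.X ⟶ 𝟙_ C) :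
    A.twist δ = functionalConv δ A.antipode :=
  rfl

theorem mul_comp_comul_comp_tensorHom {X Y Z : C} [BimonObj X] {g : X ⟶ Y} {f : X ⟶ Z}
    {p : Y ⊗ Y ⟶ Y} {q : Z ⊗ Z ⟶ Z}
    (hg : μ[X] ≫ g = (g ⊗ₘ g) ≫ p) (hf : μ[X] ≫ f = (f ⊗ₘ f) ≫ q) :
    μ[X] ≫ Δ[X] ≫ (g ⊗ₘ f) =
      ((Δ[X] ≫ (g ⊗ₘ f)) ⊗ₘ (Δ[X] ≫ (g ⊗ₘ f))) ≫ tensorμ Y Z Y Z ≫ (p ⊗ₘ q) :=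
  calc
    _ = (Δ[X] ⊗ₘ Δ[X]) ≫ tensorμ X X X X ≫ ((μ[X] ≫ g) ⊗ₘ (μ[X] ≫ f)) := by
      rw [BimonObj.mul_comul_assoc, tensorHom_comp_tensorHom]
    _ = (Δ[X] ⊗ₘ Δ[X]) ≫ tensorμ X X X X ≫ ((g ⊗ₘ g) ⊗ₘ (f ⊗ₘ f)) ≫ (p ⊗ₘ q) := by
      rw [hg, hf, tensorHom_comp_tensorHom]
    _ = _ := by
      rw [← tensorμ_natural_assoc, tensorHom_comp_tensorHom_assoc]

theorem mul_comp_functionalConv {X Y : C} [BimonObj X] {δ : X ⟶ 𝟙_ C} {f : X ⟶ Y}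
    {m : Y ⊗ Y ⟶ Y} (hδ : μ[X] ≫ δ = (δ ⊗ₘ δ) ≫ (λ_ (𝟙_ C)).hom)
    (hf : μ[X] ≫ f = (f ⊗ₘ f) ≫ m) :
    μ[X] ≫ functionalConv δ f = (functionalConv δ f ⊗ₘ functionalConv δ f) ≫ m := by
  have leftUnitor_comp_mul : tensorμ (𝟙_ C) Y (𝟙_ C) Y ≫ ((λ_ (𝟙_ C)).hom ⊗ₘ m) ≫ (λ_ Y).hom =
      ((λ_ Y).hom ⊗ₘ (λ_ Y).hom) ≫ m := by
    rw [tensorHom_def_assoc, leftUnitor_naturality, leftUnitor_monoidal]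
    simp only [Category.assoc]
  calc
    _ = (μ[X] ≫ Δ[X] ≫ (δ ⊗ₘ f)) ≫ (λ_ Y).hom := by
      simp only [functionalConv, Category.assoc]
    _ = ((Δ[X] ≫ (δ ⊗ₘ f)) ⊗ₘ (Δ[X] ≫ (δ ⊗ₘ f))) ≫ ((λ_ Y).hom ⊗ₘ (λ_ Y).hom) ≫ m := by
      simp only [mul_comp_comul_comp_tensorHom hδ hf, Category.assoc,
        leftUnitor_comp_mul]
    _ = _ := by
      rw [tensorHom_comp_tensorHom_assoc, Category.assoc, ← functionalConv]

theorem HopfObj.twist_mul_general {X Y : C} [BimonObj X] {δ : X ⟶ 𝟙_ C} {f : X ⟶ Y}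
    {m : Y ⊗ Y ⟶ Y} (hδ : μ[X] ≫ δ = (δ ⊗ₘ δ) ≫ (λ_ (𝟙_ C)).hom)
    (hf : μ[X] ≫ f = (f ⊗ₘ f) ≫ (β_ Y Y).hom ≫ m) :
    μ[X] ≫ functionalConv δ f =
        (functionalConv δ f ⊗ₘ functionalConv δ f) ≫ (β_ Y Y).hom ≫ m ∧
      μ[X] ≫ functionalConv δ f =
        (β_ X X).hom ≫ (functionalConv δ f ⊗ₘ functionalConv δ f) ≫ m := by
  have conv_mul := mul_comp_functionalConv hδ hf
  refine ⟨conv_mul, conv_mul.trans ?_⟩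
  rw [BraidedCategory.braiding_naturality_assoc]

/-- `S̃ ∘ m = m ∘ ψ ∘ (S̃ ⊗ S̃)` and `S̃ ∘ m = m ∘ (S̃ ⊗ S̃) ∘ ψ`. -/
theorem HopfObj.twist_mul (A : _root_.HopfObj C) (δ : A.X ⟶ 𝟙_ C)
    (hδ : A.IsCharacter δ) :
    A.mul ≫ A.twist δ = (A.twist δ ⊗ₘ A.twist δ) ≫ (β_ A.X A.X).hom ≫ A.mul ∧
    A.mul ≫ A.twist δ = (β_ A.X A.X).hom ≫ (A.twist δ ⊗ₘ A.twist δ) ≫ A.mul := by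
  rw [A.twist_eq_functionalConv]
  exact HopfObj.twist_mul_general hδ.1 (CategoryTheory.HopfObj.mul_antipode A.X)
end

section
/- Let H be a Hopf monoid in a braided monoidal category C and δ a character of H, with δ-twisted antipode S̃. Then Δ ∘ S̃ = ψ_{H,H} ∘ (S̃ ⊗ S) ∘ Δ and Δ ∘ S̃ = (S ⊗ S̃) ∘ ψ_{H,H} ∘ Δ as morphisms H → H ⊗ H. -/
open CategoryTheory MonoidalCategory

universe v u

variable {C : Type u} [Category.{v} C] [MonoidalCategory C] [BraidedCategory C]

/-!
Write `h ↼ δ = δ(h₍₁₎) h₍₂₎` for the action of a functional on a comonoid. Coassociativity says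
that `(- ↼ δ)` acts on the first tensor factor only, `Δ (h ↼ δ) = (h₍₁₎ ↼ δ) ⊗ h₍₂₎`, and the
twisted antipode is `S̃ h = S (h ↼ δ)`. Since `S` reverses the comultiplication through the
braiding, so does `S̃`, with the twist landing on the factor that carries `h₍₁₎`.
-/

section RightHit

open scoped ComonObj

variable {D : Type*} [Category* D] [MonoidalCategory D]

/-- The right hit action `h ↼ f = f(h₍₁₎) h₍₂₎` of a functional `f : M ⟶ 𝟙_ D` on a comonoid
object `M`, as an endomorphism of `M`. Composing it with the antipode gives the twisted antipode. -/
def rightHit {M : D} [ComonObj M] (f : M ⟶ 𝟙_ D) : M ⟶ M :=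
  Δ ≫ f ▷ M ≫ (λ_ M).hom

theorem rightHit_comp_comul {M : D} [ComonObj M] (f : M ⟶ 𝟙_ D) :
    rightHit f ≫ Δ = Δ ≫ rightHit f ▷ M :=
  calc
    rightHit f ≫ Δ = Δ ≫ f ▷ M ≫ 𝟙_ D ◁ Δ ≫ (λ_ (M ⊗ M)).hom := by
      simp only [rightHit, Category.assoc, leftUnitor_naturality]
    _ = (Δ ≫ M ◁ Δ) ≫ f ▷ (M ⊗ M) ≫ (λ_ (M ⊗ M)).hom := by
      simp only [Category.assoc, whisker_exchange_assoc]
    _ = (Δ ≫ Δ ▷ M ≫ (α_ M M M).hom) ≫ f ▷ (M ⊗ M) ≫ (λ_ (M ⊗ M)).hom := by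
      rw [ComonObj.comul_assoc]
    _ = Δ ≫ rightHit f ▷ M := by
      simp [rightHit]

theorem rightHit_comp_antihom_comp_comul [BraidedCategory D] {M N : D} [ComonObj M] [ComonObj N]
    (f : M ⟶ 𝟙_ D) {S : M ⟶ N} (hS : S ≫ Δ = Δ ≫ (S ⊗ₘ S) ≫ (β_ N N).hom) :
    (rightHit f ≫ S) ≫ Δ = Δ ≫ ((rightHit f ≫ S) ⊗ₘ S) ≫ (β_ N N).hom :=
  calc
    (rightHit f ≫ S) ≫ Δ = (rightHit f ≫ Δ) ≫ (S ⊗ₘ S) ≫ (β_ N N).hom := by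
      simp only [Category.assoc, hS]
    _ = Δ ≫ rightHit f ▷ M ≫ (S ⊗ₘ S) ≫ (β_ N N).hom := by
      rw [rightHit_comp_comul, Category.assoc]
    _ = Δ ≫ ((rightHit f ≫ S) ⊗ₘ S) ≫ (β_ N N).hom := by
      rw [whiskerRight_comp_tensorHom_assoc]

end RightHit

namespace HopfObj

/-- The underlying object of `A`, as a Hopf monoid in the sense of Mathlib. -/
instance instHopfObjX (A : _root_.HopfObj C) : CategoryTheory.HopfObj A.X where
  one := A.one
  mul := A.mul
  one_mul := A.one_mul
  mul_one := A.mul_one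
  mul_assoc := A.mul_assoc
  counit := A.counit
  comul := A.comul
  counit_comul := A.counit_comul
  comul_counit := A.comul_counit
  comul_assoc := A.comul_assoc.symm
  mul_comul := by simpa only [tensorμ, Category.assoc] using A.mul_comul
  one_comul := A.one_comul
  mul_counit := A.mul_counit
  one_counit := A.one_counit
  antipode := A.antipode
  antipode_left := A.antipode_left
  antipode_right := A.antipode_right

theorem antipode_comp_comul (A : _root_.HopfObj C) :
    A.antipode ≫ A.comul = A.comul ≫ (A.antipode ⊗ₘ A.antipode) ≫ (β_ A.X A.X).hom := by
  rw [BraidedCategory.braiding_naturality]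
  exact CategoryTheory.HopfObj.antipode_comul A.X

theorem twist_eq_rightHit_comp_antipode (A : _root_.HopfObj C) (δ : A.X ⟶ 𝟙_ C) :
    A.twist δ = rightHit δ ≫ A.antipode :=
  calc
    A.twist δ = A.comul ≫ δ ▷ A.X ≫ 𝟙_ C ◁ A.antipode ≫ (λ_ A.X).hom := by
      rw [twist, MonoidalCategory.tensorHom_def, Category.assoc]
    _ = (A.comul ≫ δ ▷ A.X ≫ (λ_ A.X).hom) ≫ A.antipode := by
      simp only [leftUnitor_naturality, Category.assoc]

theorem comul_twist_general (A : _root_.HopfObj C) (δ : A.X ⟶ 𝟙_ C) :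
    A.twist δ ≫ A.comul = A.comul ≫ (A.twist δ ⊗ₘ A.antipode) ≫ (β_ A.X A.X).hom ∧
    A.twist δ ≫ A.comul = A.comul ≫ (β_ A.X A.X).hom ≫ (A.antipode ⊗ₘ A.twist δ) := by
  have comul_eq : A.twist δ ≫ A.comul =
      A.comul ≫ (A.twist δ ⊗ₘ A.antipode) ≫ (β_ A.X A.X).hom := by
    rw [twist_eq_rightHit_comp_antipode]
    exact rightHit_comp_antihom_comp_comul δ A.antipode_comp_comul
  exact ⟨comul_eq, by rw [comul_eq, BraidedCategory.braiding_naturality]⟩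

end HopfObj

/-- `Δ ∘ S̃ = ψ ∘ (S̃ ⊗ S) ∘ Δ` and `Δ ∘ S̃ = (S ⊗ S̃) ∘ ψ ∘ Δ`. -/
theorem HopfObj.comul_twist (A : _root_.HopfObj C) (δ : A.X ⟶ 𝟙_ C)
    (hδ : A.IsCharacter δ) :
    A.twist δ ≫ A.comul = A.comul ≫ (A.twist δ ⊗ₘ A.antipode) ≫ (β_ A.X A.X).hom ∧
    A.twist δ ≫ A.comul = A.comul ≫ (β_ A.X A.X).hom ≫ (A.antipode ⊗ₘ A.twist δ) :=
  A.comul_twist_general δ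
end

section
/- Let H be a Hopf monoid in a braided monoidal category C and δ a character of H, with δ-twisted antipode S̃. Then m ∘ ((S ∘ S) ⊗ S̃) ∘ ψ_{H,H} ∘ Δ = η ∘ δ as morphisms H → H. -/
open CategoryTheory MonoidalCategory

universe v u

variable {C : Type u} [Category.{v} C] [MonoidalCategory C] [BraidedCategory C]

/-! The twisted antipode is `S` preceded by the left translation `L_δ := (δ ⊗ 1) ∘ Δ`, and
coassociativity says `Δ ∘ L_δ = (L_δ ⊗ 1) ∘ Δ`. Naturality of the braiding therefore turns the
left-hand side into `f ∘ L_δ`, with `f = m ∘ ψ ∘ (S ⊗ S²) ∘ Δ`. Since `S` reverses products,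
`f = S ∘ m ∘ (1 ⊗ S) ∘ Δ = η ∘ ε`, and `ε ∘ L_δ = δ`. -/

open scoped MonObj ComonObj CategoryTheory.HopfObj

section Comonoid

variable {D : Type u} [Category.{v} D] [MonoidalCategory D] {X : D} [ComonObj X]

/-- The left translation `(δ ⊗ 1) ∘ Δ` of a comonoid by a functional `δ`, with the unitor
inserted. When `X` is the algebra of functions on a group and `δ` is evaluation at `g`, it sends
`f` to the function `x ↦ f (g * x)`. -/
def leftTranslate (δ : X ⟶ 𝟙_ D) : X ⟶ X :=
  Δ ≫ δ ▷ X ≫ (λ_ X).hom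

theorem leftTranslate_comul (δ : X ⟶ 𝟙_ D) :
    leftTranslate δ ≫ Δ = Δ ≫ leftTranslate δ ▷ X :=
  calc leftTranslate δ ≫ Δ
    _ = (Δ ≫ X ◁ Δ) ≫ δ ▷ (X ⊗ X) ≫ (λ_ (X ⊗ X)).hom := by
      simp only [leftTranslate, Category.assoc, ← leftUnitor_naturality, whisker_exchange_assoc]
    _ = (Δ ≫ Δ ▷ X ≫ (α_ X X X).hom) ≫ δ ▷ (X ⊗ X) ≫ (λ_ (X ⊗ X)).hom := by
      rw [ComonObj.comul_assoc]
    _ = Δ ≫ leftTranslate δ ▷ X := by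
      simp [leftTranslate]

theorem leftTranslate_counit (δ : X ⟶ 𝟙_ D) : leftTranslate δ ≫ ε = δ :=
  calc leftTranslate δ ≫ ε
    _ = (Δ ≫ X ◁ ε) ≫ δ ▷ 𝟙_ D ≫ (λ_ (𝟙_ D)).hom := by
      simp only [leftTranslate, Category.assoc, ← leftUnitor_naturality, whisker_exchange_assoc]
    _ = δ := by
      simp [unitors_equal]

end Comonoid

section HopfMonoid

variable {H : C} [CategoryTheory.HopfObj H]

theorem comul_antipode_tensor_antipode_sq_braiding_mul :
    Δ ≫ (𝒮[H] ⊗ₘ (𝒮 ≫ 𝒮)) ≫ (β_ H H).hom ≫ μ = ε ≫ η :=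
  calc Δ ≫ (𝒮[H] ⊗ₘ (𝒮 ≫ 𝒮)) ≫ (β_ H H).hom ≫ μ
    _ = Δ ≫ H ◁ 𝒮 ≫ (𝒮 ⊗ₘ 𝒮) ≫ (β_ H H).hom ≫ μ := by
      simp only [tensorHom_def', whiskerLeft_comp, Category.assoc]
    _ = (Δ ≫ H ◁ 𝒮 ≫ μ) ≫ 𝒮 := by
      simp only [CategoryTheory.HopfObj.mul_antipode, Category.assoc]
    _ = ε ≫ η := by
      rw [CategoryTheory.HopfObj.antipode_right, Category.assoc,
        CategoryTheory.HopfObj.one_antipode]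

theorem comul_braiding_antipode_sq_tensor_leftTranslate_mul (δ : H ⟶ 𝟙_ C) :
    Δ ≫ (β_ H H).hom ≫ ((𝒮 ≫ 𝒮) ⊗ₘ (leftTranslate δ ≫ 𝒮)) ≫ μ = δ ≫ η :=
  calc Δ ≫ (β_ H H).hom ≫ ((𝒮 ≫ 𝒮) ⊗ₘ (leftTranslate δ ≫ 𝒮)) ≫ μ
    _ = Δ ≫ ((leftTranslate δ ≫ 𝒮) ⊗ₘ (𝒮 ≫ 𝒮)) ≫ (β_ H H).hom ≫ μ := by
      rw [BraidedCategory.braiding_naturality_assoc]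
    _ = (Δ ≫ leftTranslate δ ▷ H) ≫ (𝒮 ⊗ₘ (𝒮 ≫ 𝒮)) ≫ (β_ H H).hom ≫ μ := by
      simp only [MonoidalCategory.tensorHom_def, comp_whiskerRight, Category.assoc]
    _ = leftTranslate δ ≫ Δ ≫ (𝒮 ⊗ₘ (𝒮 ≫ 𝒮)) ≫ (β_ H H).hom ≫ μ := by
      rw [← leftTranslate_comul, Category.assoc]
    _ = (leftTranslate δ ≫ ε) ≫ η := by
      rw [comul_antipode_tensor_antipode_sq_braiding_mul, Category.assoc]
    _ = δ ≫ η := by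
      rw [leftTranslate_counit]

end HopfMonoid

/-- The underlying object as a Hopf monoid in Mathlib's sense, which gives access to the
antimultiplicativity of the antipode proved there. -/
instance HopfObj.instHopfObjX_s7 (A : _root_.HopfObj C) : CategoryTheory.HopfObj A.X where
  mul := A.mul
  one := A.one
  comul := A.comul
  counit := A.counit
  antipode := A.antipode
  mul_assoc := A.mul_assoc
  one_mul := A.one_mul
  mul_one := A.mul_one
  comul_assoc := A.comul_assoc.symm
  counit_comul := A.counit_comul
  comul_counit := A.comul_counit
  mul_comul := by simpa only [tensorμ, Category.assoc] using A.mul_comul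
  one_comul := A.one_comul
  mul_counit := A.mul_counit
  one_counit := A.one_counit
  antipode_left := A.antipode_left
  antipode_right := A.antipode_right

theorem HopfObj.twist_eq_leftTranslate_antipode (A : _root_.HopfObj C) (δ : A.X ⟶ 𝟙_ C) :
    A.twist δ = leftTranslate δ ≫ 𝒮 :=
  calc A.twist δ
    _ = Δ ≫ (δ ⊗ₘ 𝒮) ≫ (λ_ A.X).hom := rfl
    _ = leftTranslate δ ≫ 𝒮 := by
      simp only [leftTranslate, MonoidalCategory.tensorHom_def, leftUnitor_naturality,
        Category.assoc]

theorem HopfObj.mul_antipode_sq_twist_general (A : _root_.HopfObj C) (δ : A.X ⟶ 𝟙_ C) :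
    A.comul ≫ (β_ A.X A.X).hom ≫ ((A.antipode ≫ A.antipode) ⊗ₘ A.twist δ) ≫ A.mul =
      δ ≫ A.one := by
  rw [A.twist_eq_leftTranslate_antipode]
  exact comul_braiding_antipode_sq_tensor_leftTranslate_mul δ

/-- `m ∘ ((S ∘ S) ⊗ S̃) ∘ ψ ∘ Δ = η ∘ δ`. -/
theorem HopfObj.mul_antipode_sq_twist (A : _root_.HopfObj C) (δ : A.X ⟶ 𝟙_ C)
    (hδ : A.IsCharacter δ) :
    A.comul ≫ (β_ A.X A.X).hom ≫ ((A.antipode ≫ A.antipode) ⊗ₘ A.twist δ) ≫ A.mul =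
      δ ≫ A.one :=
  A.mul_antipode_sq_twist_general δ
end

section
/- Let H be a Hopf monoid in a braided monoidal category C (not assumed symmetric), and let (δ, σ) be a braided modular pair in involution for H. Then the cyclic operator τ₂ satisfies τ₂ ∘ τ₂ ∘ τ₂ = ψ_{H,H} ∘ ψ_{H,H} as endomorphisms of H ⊗ H. -/
open CategoryTheory MonoidalCategory

universe v u

variable {C : Type u} [Category.{v} C] [MonoidalCategory C] [BraidedCategory C]

/-- The cyclic operator `τ₂ = (m ⊗ m) ∘ (1_H ⊗ ψ ⊗ 1_H) ∘ ((Δ ∘ S̃) ⊗ 1_H ⊗ σ)`,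
with the `σ`-factor inserted via `H ⊗ H ≅ (H ⊗ H) ⊗ 𝟙`. -/
def HopfObj.tau2 (A : _root_.HopfObj C) (δ : A.X ⟶ 𝟙_ C) (σ : 𝟙_ C ⟶ A.X) :
    A.X ⊗ A.X ⟶ A.X ⊗ A.X :=
  (ρ_ (A.X ⊗ A.X)).inv ≫ (((A.twist δ ≫ A.comul) ⊗ₘ 𝟙 A.X) ⊗ₘ σ) ≫
    (((α_ A.X A.X A.X).hom ≫ (A.X ◁ (β_ A.X A.X).hom) ≫ (α_ A.X A.X A.X).inv) ▷ A.X) ≫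
    (α_ (A.X ⊗ A.X) A.X A.X).hom ≫ (A.mul ⊗ₘ A.mul)

/-!
Write `t` for the twisted antipode, `R` for right multiplication by `σ`, `F` for the Galois map
`a ⊗ b ↦ a₁ ⊗ a₂ b` and `β` for the braiding of `H` with itself; composites are in diagrammatic
order. Since `t` reverses `Δ`, the cyclic operator is `τ = F⁻¹ ≫ (t ≫ R) ▷ H ≫ β`, and since it
also reverses `μ`, the bialgebra axiom gives `τ² = β ≫ (t ⊗ (t ≫ t ≫ R)) ≫ F ≫ R ▷ H`. The
involution condition says that `t²` is inverse to conjugation by the grouplike `σ`, so `t ≫ R ≫ t`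
and `t ≫ t ≫ R` are translations. Together with the final `R` they are absorbed by `F`, leaving
`τ³ = F⁻¹ ≫ β² ≫ F`.

In a category that is not symmetric one still has to see that `F` commutes with `β²`. The map `t`
reverses `μ`, whereas `t²` is inverse to an automorphism of the bialgebra; comparing the two ways
of moving `t²` through `μ` shows `β² ≫ μ = μ`. A similar comparison, with the legs of `Δ` twisted
by `S` and `t`, shows `Δ ≫ β² = Δ`. The full twist identity on three strands then moves `β²`
through `F`.
-/

namespace BraidedHopf

open MonObj ComonObj CategoryTheory.HopfObj BraidedCategory

attribute [local instance] ComonObj.instTensorUnit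

section Monoidal

variable {D : Type u} [Category.{v} D] [MonoidalCategory D] {X : D}

section Translation

variable [MonObj X]

/-- Left multiplication `a ↦ g a` by a point `g` of a monoid object. -/
def mulLeft (g : 𝟙_ D ⟶ X) : X ⟶ X := (λ_ X).inv ≫ g ▷ X ≫ μ[X]

/-- Right multiplication `a ↦ a g` by a point `g` of a monoid object. -/
def mulRight (g : 𝟙_ D ⟶ X) : X ⟶ X := (ρ_ X).inv ≫ X ◁ g ≫ μ[X]

/-- The two-sided multiplication `a ↦ k a g`. It is conjugation by `g` when `k` is inverse
to `g`, but no relation between `g` and `k` is built into the definition. -/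
def conj (g k : 𝟙_ D ⟶ X) : X ⟶ X := mulLeft k ≫ mulRight g

lemma mul_comp_mulLeft (g : 𝟙_ D ⟶ X) : μ[X] ≫ mulLeft g = mulLeft g ▷ X ≫ μ[X] := by
  calc
    _ = 𝟙 _ ⊗≫ (𝟙_ D ◁ μ[X] ≫ g ▷ X) ≫ μ[X] := by simp only [mulLeft]; monoidal
    _ = 𝟙 _ ⊗≫ g ▷ X ▷ X ⊗≫ ((α_ X X X).hom ≫ X ◁ μ[X] ≫ μ[X]) := by
      rw [whisker_exchange]; monoidal
    _ = _ := by rw [← MonObj.mul_assoc]; simp only [mulLeft]; monoidal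

lemma mul_comp_mulRight (g : 𝟙_ D ⟶ X) : μ[X] ≫ mulRight g = X ◁ mulRight g ≫ μ[X] := by
  calc
    _ = 𝟙 _ ⊗≫ (μ[X] ▷ 𝟙_ D ≫ X ◁ g) ≫ μ[X] := by simp only [mulRight]; monoidal
    _ = 𝟙 _ ⊗≫ X ◁ (X ◁ g) ⊗≫ μ[X] ▷ X ≫ μ[X] := by rw [← whisker_exchange]; monoidal
    _ = _ := by rw [MonObj.mul_assoc]; simp only [mulRight]; monoidal

lemma mulRight_whiskerRight_comp_mul (g : 𝟙_ D ⟶ X) :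
    mulRight g ▷ X ≫ μ[X] = X ◁ mulLeft g ≫ μ[X] := by
  calc
    _ = 𝟙 _ ⊗≫ (X ◁ g) ▷ X ⊗≫ μ[X] ▷ X ≫ μ[X] := by simp only [mulRight]; monoidal
    _ = _ := by rw [MonObj.mul_assoc]; simp only [mulLeft]; monoidal

lemma mulRight_comp_mulLeft (g k : 𝟙_ D ⟶ X) :
    mulRight g ≫ mulLeft k = mulLeft k ≫ mulRight g := by
  calc
    _ = (ρ_ X).inv ≫ X ◁ g ≫ (μ[X] ≫ mulLeft k) := by simp only [mulRight, Category.assoc]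
    _ = (ρ_ X).inv ≫ (mulLeft k ▷ 𝟙_ D ≫ X ◁ g) ≫ μ[X] := by
      rw [mul_comp_mulLeft, ← whisker_exchange]; simp
    _ = _ := by simp only [Category.assoc, rightUnitor_inv_naturality_assoc, mulRight]

lemma mulLeft_comp_mulLeft (g k : 𝟙_ D ⟶ X) :
    mulLeft k ≫ mulLeft g = mulLeft ((λ_ _).inv ≫ (g ⊗ₘ k) ≫ μ[X]) := by
  have point_mul : k ≫ mulLeft g = (λ_ _).inv ≫ (g ⊗ₘ k) ≫ μ[X] := by
    simp [mulLeft, tensorHom_def']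
  rw [← point_mul]
  conv_lhs => rw [mulLeft, Category.assoc, Category.assoc, mul_comp_mulLeft]
  simp [mulLeft]

lemma mulRight_comp_mulRight (g k : 𝟙_ D ⟶ X) :
    mulRight g ≫ mulRight k = mulRight ((λ_ _).inv ≫ (g ⊗ₘ k) ≫ μ[X]) := by
  have point_mul : g ≫ mulRight k = (λ_ _).inv ≫ (g ⊗ₘ k) ≫ μ[X] := by
    simp [mulRight, MonoidalCategory.tensorHom_def, unitors_inv_equal]
  rw [← point_mul]
  conv_lhs => rw [mulRight, Category.assoc, Category.assoc, mul_comp_mulRight]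
  simp [mulRight]

lemma mulLeft_one : mulLeft η[X] = 𝟙 X := by simp [mulLeft]

lemma mulRight_one : mulRight η[X] = 𝟙 X := by simp [mulRight]

lemma mulLeft_comp_mulLeft_of_mul_eq_one {g k : 𝟙_ D ⟶ X}
    (hgk : (λ_ _).inv ≫ (g ⊗ₘ k) ≫ μ[X] = η[X]) : mulLeft k ≫ mulLeft g = 𝟙 X := by
  rw [mulLeft_comp_mulLeft, hgk, mulLeft_one]

lemma mulRight_comp_mulRight_of_mul_eq_one {g k : 𝟙_ D ⟶ X}
    (hgk : (λ_ _).inv ≫ (g ⊗ₘ k) ≫ μ[X] = η[X]) : mulRight g ≫ mulRight k = 𝟙 X := by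
  rw [mulRight_comp_mulRight, hgk, mulRight_one]

lemma mulRight_tensor_mulLeft_comp_mul {g k : 𝟙_ D ⟶ X}
    (hgk : (λ_ _).inv ≫ (g ⊗ₘ k) ≫ μ[X] = η[X]) :
    (mulRight g ⊗ₘ mulLeft k) ≫ μ[X] = μ[X] := by
  rw [tensorHom_def', Category.assoc, mulRight_whiskerRight_comp_mul,
    ← whiskerLeft_comp_assoc, mulLeft_comp_mulLeft_of_mul_eq_one hgk]
  simp

lemma mul_comp_conj {g k : 𝟙_ D ⟶ X} (hgk : (λ_ _).inv ≫ (g ⊗ₘ k) ≫ μ[X] = η[X]) :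
    μ[X] ≫ conj g k = (conj g k ⊗ₘ conj g k) ≫ μ[X] := by
  calc
    _ = (mulLeft k ⊗ₘ mulRight g) ≫ μ[X] := by
      rw [conj, reassoc_of% mul_comp_mulLeft k, mul_comp_mulRight,
        MonoidalCategory.tensorHom_def, Category.assoc]
    _ = (mulLeft k ⊗ₘ mulRight g) ≫ (mulRight g ⊗ₘ mulLeft k) ≫ μ[X] := by
      rw [mulRight_tensor_mulLeft_comp_mul hgk]
    _ = _ := by rw [tensorHom_comp_tensorHom_assoc, mulRight_comp_mulLeft, conj]

lemma tensorHom_mulRight {Y Z : D} (f : Y ⟶ Z) (g : 𝟙_ D ⟶ X) :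
    f ⊗ₘ mulRight g =
      (ρ_ (Y ⊗ X)).inv ≫ (Y ⊗ X) ◁ g ≫ (α_ Y X X).hom ≫ (f ⊗ₘ μ[X]) := by
  rw [MonoidalCategory.tensorHom_def', MonoidalCategory.tensorHom_def', mulRight]
  monoidal

end Translation

section Hit

variable [ComonObj X] (δ : X ⟶ 𝟙_ D)

/-- The map `a ↦ δ(a₁) a₂`, contracting the left leg of the comultiplication with `δ`. -/
def leftHit : X ⟶ X := Δ[X] ≫ δ ▷ X ≫ (λ_ X).hom

/-- The map `a ↦ a₁ δ(a₂)`, contracting the right leg of the comultiplication with `δ`. -/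
def rightHit : X ⟶ X := Δ[X] ≫ X ◁ δ ≫ (ρ_ X).hom

lemma leftHit_comp_comul : leftHit δ ≫ Δ[X] = Δ[X] ≫ leftHit δ ▷ X := by
  calc
    _ = Δ[X] ≫ (δ ▷ X ≫ 𝟙_ D ◁ Δ[X]) ⊗≫ 𝟙 _ := by simp only [leftHit]; monoidal
    _ = (Δ[X] ≫ X ◁ Δ[X]) ⊗≫ δ ▷ (X ⊗ X) ⊗≫ 𝟙 _ := by rw [← whisker_exchange]; monoidal
    _ = _ := by rw [comul_assoc]; simp only [leftHit]; monoidal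

lemma rightHit_comp_comul : rightHit δ ≫ Δ[X] = Δ[X] ≫ X ◁ rightHit δ := by
  calc
    _ = Δ[X] ≫ (X ◁ δ ≫ Δ[X] ▷ 𝟙_ D) ⊗≫ 𝟙 _ := by simp only [rightHit]; monoidal
    _ = (Δ[X] ≫ Δ[X] ▷ X ≫ (α_ X X X).hom) ⊗≫ (X ⊗ X) ◁ δ ⊗≫ 𝟙 _ := by
      rw [whisker_exchange]; monoidal
    _ = _ := by rw [← comul_assoc]; simp only [rightHit]; monoidal

lemma comul_comp_whiskerLeft_leftHit : Δ[X] ≫ X ◁ leftHit δ = Δ[X] ≫ rightHit δ ▷ X := by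
  calc
    _ = (Δ[X] ≫ X ◁ Δ[X]) ⊗≫ X ◁ δ ▷ X ⊗≫ 𝟙 _ := by simp only [leftHit]; monoidal
    _ = _ := by rw [comul_assoc]; simp only [rightHit]; monoidal

lemma leftHit_comp_rightHit : leftHit δ ≫ rightHit δ = rightHit δ ≫ leftHit δ := by
  calc
    _ = Δ[X] ≫ leftHit δ ▷ X ≫ X ◁ δ ≫ (ρ_ X).hom := by
      rw [rightHit, reassoc_of% leftHit_comp_comul δ]
    _ = _ := by
      rw [← whisker_exchange_assoc, rightUnitor_naturality]
      simp only [rightHit, Category.assoc]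

lemma comp_leftHit_of_comp_eq_one {σ : 𝟙_ D ⟶ X} [IsComonHom σ] (hσδ : σ ≫ δ = 𝟙 _) :
    σ ≫ leftHit δ = σ := by
  rw [leftHit, IsComonHom.hom_comul_assoc, tensorHom_comp_whiskerRight_assoc, hσδ]
  simp

end Hit

section Galois

variable (X) [MonObj X] [ComonObj X]

/-- The Galois map `a ⊗ b ↦ a₁ ⊗ a₂ b`. -/
def galois : X ⊗ X ⟶ X ⊗ X := Δ[X] ▷ X ≫ (α_ X X X).hom ≫ X ◁ μ[X]

variable {X}

lemma galois_comp_whiskerLeft {R : X ⟶ X} (hR : μ[X] ≫ R = X ◁ R ≫ μ[X]) :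
    galois X ≫ X ◁ R = X ◁ R ≫ galois X := by
  rw [galois, whisker_exchange_assoc]
  simp only [Category.assoc, ← whiskerLeft_comp, hR]
  simp

end Galois

end Monoidal

section Bimonoid

variable {X : C} [BimonObj X]

lemma mulLeft_comp_comul (g : 𝟙_ C ⟶ X) [IsComonHom g] :
    mulLeft g ≫ Δ[X] = Δ[X] ≫ (mulLeft g ⊗ₘ mulLeft g) := by
  have unit_shuffle : (λ_ _).inv ▷ (X ⊗ X) ≫ tensorμ (𝟙_ C) (𝟙_ C) X X =
      (λ_ _).hom ≫ ((λ_ X).inv ⊗ₘ (λ_ X).inv) := by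
    rw [← cancel_mono ((λ_ X).hom ⊗ₘ (λ_ X).hom), Category.assoc, ← tensor_left_unitality]
    simp
  calc
    _ = (λ_ X).inv ≫ 𝟙_ C ◁ Δ[X] ≫ (g ≫ Δ[X]) ▷ (X ⊗ X) ≫
        tensorμ X X X X ≫ (μ[X] ⊗ₘ μ[X]) := by
      simp only [mulLeft, BimonObj.mul_comul, whiskerRight_comp_tensorHom_assoc,
        ← tensorHom_def'_assoc, Category.assoc]
    _ = Δ[X] ≫ (λ_ _).inv ≫ ((λ_ _).inv ▷ (X ⊗ X) ≫ tensorμ (𝟙_ C) (𝟙_ C) X X) ≫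
        (g ▷ X ⊗ₘ g ▷ X) ≫ (μ[X] ⊗ₘ μ[X]) := by
      rw [IsComonHom.hom_comul, comp_whiskerRight, Category.assoc, tensorμ_natural_left_assoc,
        leftUnitor_inv_naturality_assoc, Category.assoc]
      rfl
    _ = _ := by
      rw [unit_shuffle]
      simp [mulLeft]

lemma mulRight_comp_comul (g : 𝟙_ C ⟶ X) [IsComonHom g] :
    mulRight g ≫ Δ[X] = Δ[X] ≫ (mulRight g ⊗ₘ mulRight g) := by
  have unit_shuffle : (X ⊗ X) ◁ (λ_ _).inv ≫ tensorμ X X (𝟙_ C) (𝟙_ C) =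
      (ρ_ _).hom ≫ ((ρ_ X).inv ⊗ₘ (ρ_ X).inv) := by
    rw [← cancel_mono ((ρ_ X).hom ⊗ₘ (ρ_ X).hom), Category.assoc, ← tensor_right_unitality]
    simp
  calc
    _ = (ρ_ X).inv ≫ Δ[X] ▷ 𝟙_ C ≫ (X ⊗ X) ◁ (g ≫ Δ[X]) ≫
        tensorμ X X X X ≫ (μ[X] ⊗ₘ μ[X]) := by
      simp only [mulRight, BimonObj.mul_comul, whiskerLeft_comp_tensorHom_assoc,
        ← MonoidalCategory.tensorHom_def_assoc, Category.assoc]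
    _ = Δ[X] ≫ (ρ_ _).inv ≫ ((X ⊗ X) ◁ (λ_ _).inv ≫ tensorμ X X (𝟙_ C) (𝟙_ C)) ≫
        (X ◁ g ⊗ₘ X ◁ g) ≫ (μ[X] ⊗ₘ μ[X]) := by
      rw [IsComonHom.hom_comul, whiskerLeft_comp, Category.assoc, tensorμ_natural_right_assoc,
        rightUnitor_inv_naturality_assoc, Category.assoc]
      rfl
    _ = _ := by
      rw [unit_shuffle]
      simp [mulRight]

lemma conj_comp_comul (g k : 𝟙_ C ⟶ X) [IsComonHom g] [IsComonHom k] :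
    conj g k ≫ Δ[X] = Δ[X] ≫ (conj g k ⊗ₘ conj g k) := by
  rw [conj, Category.assoc, mulRight_comp_comul g, reassoc_of% mulLeft_comp_comul k,
    tensorHom_comp_tensorHom]

lemma mul_comp_leftHit (δ : X ⟶ 𝟙_ C) [IsMonHom δ] :
    μ[X] ≫ leftHit δ = (leftHit δ ⊗ₘ leftHit δ) ≫ μ[X] := by
  calc
    _ = (Δ[X] ⊗ₘ Δ[X]) ≫ (tensorμ X X X X ≫ ((δ ⊗ₘ δ) ⊗ₘ (𝟙 X ⊗ₘ 𝟙 X))) ≫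
        ((λ_ (𝟙_ C)).hom ⊗ₘ μ[X]) ≫ (λ_ X).hom := by
      rw [leftHit, BimonObj.mul_comul_assoc, tensorHom_comp_whiskerRight_assoc,
        IsMonHom.mul_hom]
      simp only [Category.assoc, tensorHom_comp_tensorHom_assoc, id_tensorHom_id,
        Category.id_comp]
      rfl
    _ = (Δ[X] ⊗ₘ Δ[X]) ≫ (δ ▷ X ⊗ₘ δ ▷ X) ≫ ((λ_ X).hom ⊗ₘ (λ_ X).hom) ≫ μ[X] := by
      rw [← tensorμ_natural, leftUnitor_monoidal_assoc, ← leftUnitor_naturality,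
        ← MonoidalCategory.tensorHom_def_assoc]
      simp only [tensorHom_id, Category.assoc]
    _ = _ := by simp only [leftHit, tensorHom_comp_tensorHom_assoc]

lemma galois_mulRight_tensor_mulLeft {g k : 𝟙_ C ⟶ X} [IsComonHom k]
    (hkg : (λ_ _).inv ≫ (k ⊗ₘ g) ≫ μ[X] = η[X]) :
    (mulRight k ⊗ₘ mulLeft g) ≫ galois X ≫ mulRight g ▷ X = galois X := by
  calc
    _ = (mulRight k ≫ Δ[X]) ▷ X ≫ (X ⊗ X) ◁ mulLeft g ≫ (α_ X X X).hom ≫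
        (mulRight g ⊗ₘ μ[X]) := by
      simp only [galois, MonoidalCategory.tensorHom_def', comp_whiskerRight, Category.assoc,
        whisker_exchange_assoc]
    _ = Δ[X] ▷ X ≫ (α_ X X X).hom ≫
        ((mulRight k ≫ mulRight g) ⊗ₘ ((mulRight k ⊗ₘ mulLeft g) ≫ μ[X])) := by
      rw [mulRight_comp_comul, comp_whiskerRight, Category.assoc,
        ← MonoidalCategory.tensorHom_def_assoc, associator_naturality_assoc,
        tensorHom_comp_tensorHom]
    _ = _ := by
      rw [mulRight_comp_mulRight_of_mul_eq_one hkg, mulRight_tensor_mulLeft_comp_mul hkg,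
        id_tensorHom, galois]

end Bimonoid

section Braiding

lemma fullTwist_eq (X Y Z : C) :
    ((β_ X Y).hom ≫ (β_ Y X).hom) ▷ Z ≫ (β_ (X ⊗ Y) Z).hom ≫ (β_ Z (X ⊗ Y)).hom =
      (α_ X Y Z).hom ≫ ((β_ X (Y ⊗ Z)).hom ≫ (β_ (Y ⊗ Z) X).hom) ≫
        X ◁ ((β_ Y Z).hom ≫ (β_ Z Y).hom) ≫ (α_ X Y Z).inv := by
  rw [comp_whiskerRight, Category.assoc, braiding_naturality_left_assoc,
    braiding_naturality_right, whiskerLeft_comp, Category.assoc, Category.assoc,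
    ← braiding_naturality_left_assoc]
  simp [← yang_baxter_assoc]

lemma whiskerLeft_braiding_comp_braiding (X Y Z : C) :
    (α_ X Y Z).hom ≫ X ◁ (β_ Y Z).hom ≫ (β_ X (Z ⊗ Y)).hom ≫ (α_ Z Y X).hom =
      (β_ (X ⊗ Y) Z).hom ≫ Z ◁ (β_ X Y).hom := by
  rw [braiding_tensor_left_hom, braiding_tensor_right_hom]
  simp

lemma tensorHom_comp_braiding_comp_braiding {X Y X' Y' : C} (f : X ⟶ X') (g : Y ⟶ Y') :
    (f ⊗ₘ g) ≫ (β_ X' Y').hom ≫ (β_ Y' X').hom =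
      (β_ X Y).hom ≫ (β_ Y X).hom ≫ (f ⊗ₘ g) := by
  rw [braiding_naturality_assoc, braiding_naturality]

lemma braiding_comp_braiding_comp_mul {X : C} [MonObj X] {f p : X ⟶ X}
    (hf : μ[X] ≫ f = (f ⊗ₘ f) ≫ (β_ X X).hom ≫ μ[X])
    (hp : μ[X] ≫ p = (p ⊗ₘ p) ≫ μ[X]) (hfp : f ≫ f ≫ p = 𝟙 X) :
    (β_ X X).hom ≫ (β_ X X).hom ≫ μ[X] = μ[X] := by
  symm
  calc
    _ = μ[X] ≫ f ≫ f ≫ p := by rw [hfp, Category.comp_id]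
    _ = ((f ≫ f ≫ p) ⊗ₘ (f ≫ f ≫ p)) ≫ (β_ X X).hom ≫ (β_ X X).hom ≫ μ[X] := by
      rw [reassoc_of% hf, reassoc_of% hf, hp, ← braiding_naturality_assoc,
        ← reassoc_of% tensorHom_comp_braiding_comp_braiding p p]
      simp only [braiding_naturality_assoc, ← tensorHom_comp_tensorHom_assoc]
    _ = _ := by rw [hfp, id_tensorHom_id, Category.id_comp]

variable (X : C) [MonObj X] [ComonObj X]

/-- The braided Galois map `(μ ⊗ 1) ∘ (1 ⊗ β) ∘ (Δ ⊗ 1)`, in which `b` is carried past `a₂`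
to multiply `a₁`. -/
def braidedGalois : X ⊗ X ⟶ X ⊗ X :=
  Δ[X] ▷ X ≫ (α_ X X X).hom ≫ X ◁ (β_ X X).hom ≫ (α_ X X X).inv ≫ μ[X] ▷ X

lemma braidedGalois_eq :
    braidedGalois X = (Δ[X] ⊗ₘ ((ρ_ X).inv ≫ X ◁ η[X])) ≫ μ[X ⊗ X] := by
  symm
  simp only [braidedGalois, MonObj.tensorObj.mul_def, tensorμ]
  calc
    _ = 𝟙 _ ⊗≫ Δ[X] ▷ X ⊗≫ X ◁ ((X ⊗ X) ◁ η[X] ≫ (β_ X X).hom ▷ X) ⊗≫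
        μ[X] ▷ (X ⊗ X) ⊗≫ X ◁ μ[X] := by
      simp only [MonoidalCategory.tensorHom_def]; monoidal
    _ = 𝟙 _ ⊗≫ Δ[X] ▷ X ⊗≫ X ◁ (β_ X X).hom ⊗≫
        ((X ⊗ X) ◁ (X ◁ η[X]) ≫ μ[X] ▷ (X ⊗ X)) ⊗≫ X ◁ μ[X] := by
      rw [whisker_exchange]; monoidal
    _ = 𝟙 _ ⊗≫ Δ[X] ▷ X ⊗≫ X ◁ (β_ X X).hom ⊗≫ μ[X] ▷ X ⊗≫ X ◁ (X ◁ η[X] ≫ μ[X]) := by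
      rw [whisker_exchange]; monoidal
    _ = _ := by rw [MonObj.mul_one]; monoidal

lemma galois_eq : galois X = (Δ[X] ⊗ₘ ((λ_ X).inv ≫ η[X] ▷ X)) ≫ μ[X ⊗ X] := by
  symm
  simp only [galois, MonObj.tensorObj.mul_def, tensorμ]
  calc
    _ = 𝟙 _ ⊗≫ Δ[X] ▷ X ⊗≫ X ◁ ((X ◁ η[X] ≫ (β_ X X).hom) ▷ X) ⊗≫
        (X ⊗ X) ◁ μ[X] ⊗≫ μ[X] ▷ X := by
      rw [MonoidalCategory.tensorHom_def, MonoidalCategory.tensorHom_def' μ[X]]; monoidal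
    _ = 𝟙 _ ⊗≫ Δ[X] ▷ X ⊗≫ ((X ◁ η[X]) ▷ (X ⊗ X) ≫ (X ⊗ X) ◁ μ[X]) ⊗≫ μ[X] ▷ X := by
      rw [braiding_naturality_right, braiding_tensorUnit_right]; monoidal
    _ = 𝟙 _ ⊗≫ Δ[X] ▷ X ⊗≫ X ◁ μ[X] ⊗≫ (X ◁ η[X] ≫ μ[X]) ▷ X := by
      rw [← whisker_exchange]; monoidal
    _ = _ := by rw [MonObj.mul_one]; monoidal

variable {X}

lemma whiskerLeft_comp_braidedGalois {R : X ⟶ X} (hR : μ[X] ≫ R = X ◁ R ≫ μ[X]) :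
    X ◁ R ≫ braidedGalois X = braidedGalois X ≫ R ▷ X := by
  calc
    _ = Δ[X] ▷ X ≫ (α_ X X X).hom ≫ X ◁ (X ◁ R ≫ (β_ X X).hom) ≫ (α_ X X X).inv ≫
        μ[X] ▷ X := by
      rw [braidedGalois, whisker_exchange_assoc]; simp [-braiding_naturality_right]
    _ = Δ[X] ▷ X ≫ (α_ X X X).hom ≫ X ◁ (β_ X X).hom ≫ (α_ X X X).inv ≫
        (X ◁ R ≫ μ[X]) ▷ X := by
      rw [braiding_naturality_right]; simp
    _ = _ := by rw [← hR]; simp [braidedGalois]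

/-- The composite of `t ⊗ 1`, the braided Galois map and `1 ⊗ R`. It is the cyclic operator `τ₂`
when `t` is the twisted antipode and `R` is right multiplication by `σ`; keeping `t` and `R`
arbitrary isolates the identities each of them has to satisfy. -/
def cyclicOp (t R : X ⟶ X) : X ⊗ X ⟶ X ⊗ X := t ▷ X ≫ braidedGalois X ≫ X ◁ R

lemma braiding_comp_braiding_comp_galois
    (hμ : (β_ X X).hom ≫ (β_ X X).hom ≫ μ[X] = μ[X])
    (hΔ : Δ[X] ≫ (β_ X X).hom ≫ (β_ X X).hom = Δ[X]) :
    (β_ X X).hom ≫ (β_ X X).hom ≫ galois X = galois X ≫ (β_ X X).hom ≫ (β_ X X).hom := by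
  calc
    _ = Δ[X] ▷ X ≫ ((β_ (X ⊗ X) X).hom ≫ (β_ X (X ⊗ X)).hom) ≫
        (α_ X X X).hom ≫ X ◁ μ[X] := by
      rw [galois, ← braiding_naturality_right_assoc, ← braiding_naturality_left_assoc,
        Category.assoc]
    _ = Δ[X] ▷ X ≫ (((β_ X X).hom ≫ (β_ X X).hom) ▷ X ≫
        (β_ (X ⊗ X) X).hom ≫ (β_ X (X ⊗ X)).hom) ≫ (α_ X X X).hom ≫ X ◁ μ[X] := by
      conv_lhs => rw [← hΔ, comp_whiskerRight]
      simp only [Category.assoc]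
    _ = Δ[X] ▷ X ≫ (α_ X X X).hom ≫ ((β_ X (X ⊗ X)).hom ≫ (β_ (X ⊗ X) X).hom) ≫
        X ◁ ((β_ X X).hom ≫ (β_ X X).hom ≫ μ[X]) := by
      rw [fullTwist_eq]
      simp only [Category.assoc, Iso.inv_hom_id_assoc, whiskerLeft_comp]
    _ = _ := by
      simp only [hμ, galois, Category.assoc, braiding_naturality_left,
        braiding_naturality_right_assoc]

end Braiding

lemma mul_whiskerRight_comp_braidedGalois {X : C} [BimonObj X] :
    μ[X] ▷ X ≫ braidedGalois X =
      (α_ X X X).hom ≫ X ◁ braidedGalois X ≫ Δ[X] ▷ (X ⊗ X) ≫ μ[X ⊗ X] := by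
  rw [braidedGalois_eq]
  generalize (ρ_ X).inv ≫ X ◁ η[X] = g
  calc
    _ = (μ[X] ≫ Δ[X]) ▷ X ≫ (X ⊗ X) ◁ g ≫ μ[X ⊗ X] := by
      simp only [MonoidalCategory.tensorHom_def, comp_whiskerRight, Category.assoc]
    _ = ((Δ[X] ⊗ₘ Δ[X]) ⊗ₘ g) ≫ μ[X ⊗ X] ▷ (X ⊗ X) ≫ μ[X ⊗ X] := by
      rw [BimonObj.mul_comul, ← MonObj.tensorObj.mul_def, comp_whiskerRight_assoc,
        ← whisker_exchange_assoc, MonoidalCategory.tensorHom_def_assoc]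
    _ = (α_ X X X).hom ≫ (Δ[X] ⊗ₘ ((Δ[X] ⊗ₘ g) ≫ μ[X ⊗ X])) ≫ μ[X ⊗ X] := by
      rw [MonObj.mul_assoc, associator_naturality_assoc, tensorHom_comp_whiskerLeft_assoc]
    _ = _ := by rw [MonoidalCategory.tensorHom_def', Category.assoc]

section Hopf

variable {X : C} [CategoryTheory.HopfObj X]

variable (X) in
/-- The map `a ⊗ b ↦ a₁ ⊗ S(a₂) b`, inverse to the Galois map. -/
def galoisInv : X ⊗ X ⟶ X ⊗ X := Δ[X] ▷ X ≫ (α_ X X X).hom ≫ X ◁ (𝒮[X] ▷ X ≫ μ[X])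

variable (X) in
lemma galoisInv_comp_galois : galoisInv X ≫ galois X = 𝟙 (X ⊗ X) := by
  calc
    _ = 𝟙 _ ⊗≫ Δ[X] ▷ X ⊗≫ (X ◁ (𝒮[X] ▷ X ≫ μ[X]) ≫ Δ[X] ▷ X) ⊗≫ X ◁ μ[X] := by
      simp only [galois, galoisInv]; monoidal
    _ = 𝟙 _ ⊗≫ (Δ[X] ≫ Δ[X] ▷ X ≫ (α_ X X X).hom) ▷ X ⊗≫ X ◁ (X ◁ 𝒮[X]) ▷ X ⊗≫
        X ◁ ((α_ X X X).hom ≫ X ◁ μ[X] ≫ μ[X]) := by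
      rw [whisker_exchange]; monoidal
    _ = 𝟙 _ ⊗≫ Δ[X] ▷ X ⊗≫ X ◁ (Δ[X] ≫ X ◁ 𝒮[X] ≫ μ[X]) ▷ X ⊗≫ X ◁ μ[X] := by
      rw [← comul_assoc, ← MonObj.mul_assoc]; monoidal
    _ = 𝟙 _ ⊗≫ (Δ[X] ≫ X ◁ ε[X]) ▷ X ⊗≫ X ◁ (η[X] ▷ X ≫ μ[X]) := by
      rw [antipode_right]; monoidal
    _ = _ := by rw [comul_counit, MonObj.one_mul]; monoidal

variable (X) in
lemma comul_comp_galoisInv : Δ[X] ≫ galoisInv X = (ρ_ X).inv ≫ X ◁ η[X] := by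
  rw [galoisInv, ← comul_assoc_assoc, ← whiskerLeft_comp, antipode_left]
  simp

lemma whiskerRight_comp_braidedGalois {t : X ⟶ X}
    (ht : t ≫ Δ[X] = Δ[X] ≫ (β_ X X).hom ≫ (𝒮[X] ⊗ₘ t)) :
    t ▷ X ≫ braidedGalois X = galoisInv X ≫ t ▷ X ≫ (β_ X X).hom := by
  symm
  calc
    _ = Δ[X] ▷ X ≫ (α_ X X X).hom ≫ X ◁ 𝒮[X] ▷ X ≫ (X ◁ μ[X] ≫ (β_ X X).hom) ≫
        X ◁ t := by
      rw [braiding_naturality_left]; simp [galoisInv]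
    _ = Δ[X] ▷ X ≫ (β_ X X).hom ▷ X ≫ (α_ X X X).hom ≫ X ◁ (β_ X X).hom ≫
        (α_ X X X).inv ≫ (𝒮[X] ▷ X ≫ μ[X]) ▷ X ≫ X ◁ t := by
      rw [braiding_naturality_right, Category.assoc, braiding_naturality_right_assoc]
      simp
    _ = Δ[X] ▷ X ≫ (β_ X X).hom ▷ X ≫ (𝒮[X] ⊗ₘ t) ▷ X ≫ (α_ X X X).hom ≫
        X ◁ (β_ X X).hom ≫ (α_ X X X).inv ≫ μ[X] ▷ X := by
      rw [← tensorHom_id (𝒮[X] ⊗ₘ t), associator_naturality_assoc, tensorHom_id,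
        tensorHom_comp_whiskerLeft_assoc, braiding_naturality_left,
        ← whiskerLeft_comp_tensorHom_assoc, ← id_tensorHom X t,
        associator_inv_naturality_assoc, tensorHom_id, MonoidalCategory.tensorHom_def_assoc,
        id_tensorHom, comp_whiskerRight_assoc, ← whisker_exchange]
    _ = _ := by
      rw [braidedGalois, ← comp_whiskerRight_assoc t, ht]
      simp only [comp_whiskerRight, Category.assoc]

lemma comul_comp_tensorHom_braidedGalois {t : X ⟶ X}
    (ht : t ≫ Δ[X] = Δ[X] ≫ (β_ X X).hom ≫ (𝒮[X] ⊗ₘ t)) :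
    Δ[X] ≫ (t ⊗ₘ (𝒮[X] ≫ t)) ≫ (β_ X X).hom ≫ braidedGalois X =
      t ≫ t ≫ (λ_ X).inv ≫ η[X] ▷ X := by
  calc
    _ = (Δ[X] ≫ (β_ X X).hom ≫ (𝒮[X] ⊗ₘ t)) ≫ t ▷ X ≫ braidedGalois X := by
      rw [braiding_naturality_assoc]
      simp only [Category.assoc, tensorHom_comp_whiskerRight_assoc]
    _ = t ≫ (Δ[X] ≫ galoisInv X) ≫ t ▷ X ≫ (β_ X X).hom := by
      rw [← ht, whiskerRight_comp_braidedGalois ht]; simp only [Category.assoc]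
    _ = t ≫ (ρ_ X).inv ≫ (X ◁ η[X] ≫ t ▷ X) ≫ (β_ X X).hom := by
      rw [comul_comp_galoisInv]; simp only [Category.assoc]
    _ = _ := by rw [whisker_exchange]; simp

lemma galoisInv_comp_tensorHom_braidedGalois {t : X ⟶ X}
    (hΔ : t ≫ Δ[X] = Δ[X] ≫ (β_ X X).hom ≫ (𝒮[X] ⊗ₘ t))
    (hμ : μ[X] ≫ t = (t ⊗ₘ t) ≫ (β_ X X).hom ≫ μ[X]) :
    galoisInv X ≫ (t ⊗ₘ t) ≫ (β_ X X).hom ≫ braidedGalois X =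
      (β_ X X).hom ≫ (t ⊗ₘ (t ≫ t)) ≫ galois X := by
  calc
    _ = Δ[X] ▷ X ≫ (α_ X X X).hom ≫ X ◁ 𝒮[X] ▷ X ≫ (t ⊗ₘ (μ[X] ≫ t)) ≫
        (β_ X X).hom ≫ braidedGalois X := by
      simp [galoisInv, MonoidalCategory.tensorHom_def']
    _ = Δ[X] ▷ X ≫ (α_ X X X).hom ≫ (t ⊗ₘ ((𝒮[X] ≫ t) ⊗ₘ t)) ≫ X ◁ (β_ X X).hom ≫
        (β_ X (X ⊗ X)).hom ≫ μ[X] ▷ X ≫ braidedGalois X := by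
      rw [hμ, ← braiding_naturality_right_assoc]
      simp only [whiskerLeft_comp_tensorHom_assoc, whiskerRight_comp_tensorHom_assoc,
        tensorHom_comp_whiskerLeft_assoc, Category.assoc]
    _ = Δ[X] ▷ X ≫ ((t ⊗ₘ (𝒮[X] ≫ t)) ⊗ₘ t) ≫ ((α_ X X X).hom ≫ X ◁ (β_ X X).hom ≫
        (β_ X (X ⊗ X)).hom ≫ (α_ X X X).hom) ≫ X ◁ braidedGalois X ≫
        Δ[X] ▷ (X ⊗ X) ≫ μ[X ⊗ X] := by
      rw [mul_whiskerRight_comp_braidedGalois, ← associator_naturality_assoc]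
      simp only [Category.assoc]
    _ = Δ[X] ▷ X ≫ ((t ⊗ₘ (𝒮[X] ≫ t)) ⊗ₘ t) ≫ (β_ (X ⊗ X) X).hom ≫
        X ◁ ((β_ X X).hom ≫ braidedGalois X) ≫ Δ[X] ▷ (X ⊗ X) ≫ μ[X ⊗ X] := by
      rw [whiskerLeft_braiding_comp_braiding]
      simp only [Category.assoc, whiskerLeft_comp]
    _ = (β_ X X).hom ≫ (t ⊗ₘ (Δ[X] ≫ (t ⊗ₘ (𝒮[X] ≫ t)) ≫ (β_ X X).hom ≫
        braidedGalois X)) ≫ Δ[X] ▷ (X ⊗ X) ≫ μ[X ⊗ X] := by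
      rw [braiding_naturality_assoc, braiding_naturality_left_assoc,
        tensorHom_comp_whiskerLeft_assoc, whiskerLeft_comp_tensorHom_assoc]
    _ = _ := by
      rw [comul_comp_tensorHom_braidedGalois hΔ, galois_eq, tensorHom_comp_whiskerRight_assoc,
        tensorHom_comp_tensorHom_assoc, Category.assoc]

/-- The `δ`-twisted antipode `a ↦ δ(a₁) S(a₂)`. -/
def twistedAntipode (δ : X ⟶ 𝟙_ C) : X ⟶ X := leftHit δ ≫ 𝒮[X]

section TwistedAntipode

variable (δ : X ⟶ 𝟙_ C)

lemma twistedAntipode_comp_comul :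
    twistedAntipode δ ≫ Δ[X] = Δ[X] ≫ (β_ X X).hom ≫ (𝒮[X] ⊗ₘ twistedAntipode δ) := by
  rw [twistedAntipode, Category.assoc, antipode_comul, reassoc_of% leftHit_comp_comul δ,
    braiding_naturality_left_assoc, whiskerLeft_comp_tensorHom]

lemma antipode_comp_leftHit :
    𝒮[X] ≫ leftHit δ = rightHit (𝒮[X] ≫ δ) ≫ 𝒮[X] := by
  calc
    _ = Δ[X] ≫ (β_ X X).hom ≫ ((𝒮[X] ≫ δ) ⊗ₘ 𝒮[X]) ≫ (λ_ X).hom := by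
      rw [leftHit, reassoc_of% (antipode_comul X), tensorHom_comp_whiskerRight_assoc]
    _ = Δ[X] ≫ (𝒮[X] ⊗ₘ (𝒮[X] ≫ δ)) ≫ (ρ_ X).hom := by
      rw [← braiding_naturality_assoc, braiding_leftUnitor]
    _ = _ := by
      rw [MonoidalCategory.tensorHom_def', Category.assoc, rightUnitor_naturality, rightHit]
      simp only [Category.assoc]

variable [IsMonHom δ]

lemma mul_comp_twistedAntipode :
    μ[X] ≫ twistedAntipode δ =
      (twistedAntipode δ ⊗ₘ twistedAntipode δ) ≫ (β_ X X).hom ≫ μ[X] := by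
  rw [twistedAntipode, reassoc_of% mul_comp_leftHit δ, mul_antipode,
    tensorHom_comp_tensorHom_assoc]

lemma rightHit_comp_antipode_comp : rightHit δ ≫ 𝒮[X] ≫ δ = ε[X] := by
  calc
    _ = Δ[X] ≫ (X ◁ δ ≫ (𝒮[X] ≫ δ) ▷ 𝟙_ C) ≫ (ρ_ _).hom := by
      simp only [rightHit, Category.assoc, rightUnitor_naturality]
    _ = Δ[X] ≫ 𝒮[X] ▷ X ≫ (δ ⊗ₘ δ) ≫ (λ_ (𝟙_ C)).hom := by
      rw [← MonoidalCategory.tensorHom_def', unitors_equal, whiskerRight_comp_tensorHom_assoc]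
    _ = Δ[X] ≫ 𝒮[X] ▷ X ≫ μ[X] ≫ δ := by rw [IsMonHom.mul_hom]; rfl
    _ = ε[X] := by
      rw [antipode_left_assoc, IsMonHom.one_hom]; exact Category.comp_id _

lemma rightHit_comp_antipode_comp_leftHit : rightHit δ ≫ 𝒮[X] ≫ leftHit δ = 𝒮[X] := by
  calc
    _ = Δ[X] ≫ X ◁ (rightHit δ ≫ 𝒮[X] ≫ δ) ≫ (ρ_ X).hom ≫ 𝒮[X] := by
      rw [antipode_comp_leftHit, rightHit.eq_def (𝒮[X] ≫ δ), Category.assoc, Category.assoc,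
        reassoc_of% rightHit_comp_comul δ, ← whiskerLeft_comp_assoc]
    _ = _ := by rw [rightHit_comp_antipode_comp, comul_counit_assoc, Iso.inv_hom_id_assoc]

lemma twistedAntipode_comp_antipode :
    twistedAntipode δ ≫ 𝒮[X] = rightHit δ ≫ twistedAntipode δ ≫ twistedAntipode δ := by
  simp only [twistedAntipode, Category.assoc]
  rw [← reassoc_of% leftHit_comp_rightHit δ, reassoc_of% rightHit_comp_antipode_comp_leftHit δ]

lemma comul_comp_braiding_comp_braiding {p : X ⟶ X} (hp : p ≫ Δ[X] = Δ[X] ≫ (p ⊗ₘ p))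
    (h : twistedAntipode δ ≫ twistedAntipode δ ≫ p = 𝟙 X) :
    Δ[X] ≫ (β_ X X).hom ≫ (β_ X X).hom = Δ[X] := by
  set t := twistedAntipode δ with ht
  have comul_absorbs : Δ[X] ≫ ((t ≫ 𝒮[X] ≫ p) ⊗ₘ (𝒮[X] ≫ t ≫ p)) = Δ[X] := by
    calc
      _ = Δ[X] ≫ rightHit δ ▷ X ≫ ((t ≫ t ≫ p) ⊗ₘ (𝒮[X] ≫ t ≫ p)) := by
        rw [reassoc_of% twistedAntipode_comp_antipode δ, whiskerRight_comp_tensorHom]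
      _ = Δ[X] ≫ ((t ≫ t ≫ p) ⊗ₘ (t ≫ t ≫ p)) := by
        rw [← reassoc_of% comul_comp_whiskerLeft_leftHit δ, whiskerLeft_comp_tensorHom,
          ht, twistedAntipode]
        simp only [Category.assoc]
      _ = _ := by rw [h]; simp
  symm
  calc
    _ = (t ≫ t ≫ p) ≫ Δ[X] := by rw [h, Category.id_comp]
    _ = Δ[X] ≫ (β_ X X).hom ≫ (𝒮[X] ⊗ₘ t) ≫ (β_ X X).hom ≫ (𝒮[X] ⊗ₘ t) ≫ (p ⊗ₘ p) := by
      rw [Category.assoc, Category.assoc, hp,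
        reassoc_of% twistedAntipode_comp_comul δ, reassoc_of% twistedAntipode_comp_comul δ]
    _ = (Δ[X] ≫ ((t ≫ 𝒮[X] ≫ p) ⊗ₘ (𝒮[X] ≫ t ≫ p))) ≫ (β_ X X).hom ≫ (β_ X X).hom := by
      rw [Category.assoc, tensorHom_comp_braiding_comp_braiding, braiding_naturality_assoc]
      simp only [tensorHom_comp_tensorHom]
    _ = _ := by rw [comul_absorbs]

end TwistedAntipode

section Point

variable (σ : 𝟙_ C ⟶ X) [IsComonHom σ]

instance isComonHom_comp_antipode : IsComonHom (σ ≫ 𝒮[X]) where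
  hom_comul := by
    have braiding_unit : (β_ (𝟙_ C) (𝟙_ C)).hom = 𝟙 _ := by
      rw [braiding_tensorUnit_left, unitors_equal, Iso.hom_inv_id]
    rw [Category.assoc, antipode_comul, IsComonHom.hom_comul_assoc, braiding_naturality_assoc,
      braiding_unit, Category.id_comp, tensorHom_comp_tensorHom]
  hom_counit := by
    rw [Category.assoc, antipode_counit, IsComonHom.hom_counit]

lemma grouplike_mul_antipode : (λ_ _).inv ≫ (σ ⊗ₘ (σ ≫ 𝒮[X])) ≫ μ[X] = η[X] := by
  calc
    _ = σ ≫ Δ[X] ≫ X ◁ 𝒮[X] ≫ μ[X] := by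
      rw [IsComonHom.hom_comul_assoc, tensorHom_comp_whiskerLeft_assoc]; rfl
    _ = η[X] := by
      rw [antipode_right, IsComonHom.hom_counit_assoc]; exact Category.id_comp _

lemma antipode_mul_grouplike : (λ_ _).inv ≫ ((σ ≫ 𝒮[X]) ⊗ₘ σ) ≫ μ[X] = η[X] := by
  calc
    _ = σ ≫ Δ[X] ≫ 𝒮[X] ▷ X ≫ μ[X] := by
      rw [IsComonHom.hom_comul_assoc, tensorHom_comp_whiskerRight_assoc]; rfl
    _ = η[X] := by
      rw [antipode_left, IsComonHom.hom_counit_assoc]; exact Category.id_comp _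

end Point

section Cyclic

variable {t R : X ⟶ X}

lemma cyclicOp_eq (hΔ : t ≫ Δ[X] = Δ[X] ≫ (β_ X X).hom ≫ (𝒮[X] ⊗ₘ t)) :
    cyclicOp t R = galoisInv X ≫ (t ≫ R) ▷ X ≫ (β_ X X).hom := by
  rw [cyclicOp, reassoc_of% whiskerRight_comp_braidedGalois hΔ, comp_whiskerRight_assoc,
    braiding_naturality_left]

lemma cyclicOp_comp_cyclicOp (hΔ : t ≫ Δ[X] = Δ[X] ≫ (β_ X X).hom ≫ (𝒮[X] ⊗ₘ t))
    (hμ : μ[X] ≫ t = (t ⊗ₘ t) ≫ (β_ X X).hom ≫ μ[X])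
    (hR : μ[X] ≫ R = X ◁ R ≫ μ[X]) :
    cyclicOp t R ≫ cyclicOp t R =
      (β_ X X).hom ≫ (t ⊗ₘ (t ≫ t ≫ R)) ≫ galois X ≫ R ▷ X := by
  calc
    _ = (galoisInv X ≫ (t ≫ R) ▷ X ≫ (β_ X X).hom) ≫ t ▷ X ≫ braidedGalois X ≫ X ◁ R := by
      rw [← cyclicOp_eq hΔ, cyclicOp]
    _ = galoisInv X ≫ (t ⊗ₘ t) ≫ (β_ X X).hom ≫ (X ◁ R ≫ braidedGalois X) ≫ X ◁ R := by
      simp only [Category.assoc]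
      rw [← braiding_naturality_right_assoc, ← braiding_naturality_left_assoc,
        ← MonoidalCategory.tensorHom_def_assoc, tensorHom_comp_whiskerRight_assoc]
    _ = (galoisInv X ≫ (t ⊗ₘ t) ≫ (β_ X X).hom ≫ braidedGalois X) ≫ R ▷ X ≫ X ◁ R := by
      rw [whiskerLeft_comp_braidedGalois hR]; simp only [Category.assoc]
    _ = (β_ X X).hom ≫ (t ⊗ₘ (t ≫ t)) ≫ (galois X ≫ X ◁ R) ≫ R ▷ X := by
      rw [galoisInv_comp_tensorHom_braidedGalois hΔ hμ, ← whisker_exchange]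
      simp only [Category.assoc]
    _ = _ := by
      rw [galois_comp_whiskerLeft hR, Category.assoc, tensorHom_comp_whiskerLeft_assoc,
        Category.assoc]

lemma cyclicOp_cubed (hΔ : t ≫ Δ[X] = Δ[X] ≫ (β_ X X).hom ≫ (𝒮[X] ⊗ₘ t))
    (hμ : μ[X] ≫ t = (t ⊗ₘ t) ≫ (β_ X X).hom ≫ μ[X])
    (hR : μ[X] ≫ R = X ◁ R ≫ μ[X]) :
    cyclicOp t R ≫ cyclicOp t R ≫ cyclicOp t R =
      galoisInv X ≫ (β_ X X).hom ≫ (β_ X X).hom ≫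
        ((t ≫ R ≫ t) ⊗ₘ (t ≫ t ≫ R)) ≫ galois X ≫ R ▷ X := by
  rw [cyclicOp_comp_cyclicOp hΔ hμ hR, cyclicOp_eq hΔ]
  simp only [Category.assoc, braiding_naturality_left_assoc, braiding_naturality_right_assoc,
    whiskerRight_comp_tensorHom_assoc]

end Cyclic

section ModularPair

variable {δ : X ⟶ 𝟙_ C} {σ : 𝟙_ C ⟶ X} [IsComonHom σ]

lemma grouplike_comp_twistedAntipode (hσδ : σ ≫ δ = 𝟙 _) : σ ≫ twistedAntipode δ = σ ≫ 𝒮[X] := by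
  rw [twistedAntipode, reassoc_of% comp_leftHit_of_comp_eq_one δ hσδ]

variable [IsMonHom δ]

lemma mulRight_comp_twistedAntipode (hσδ : σ ≫ δ = 𝟙 _) :
    mulRight σ ≫ twistedAntipode δ = twistedAntipode δ ≫ mulLeft (σ ≫ 𝒮[X]) := by
  rw [← grouplike_comp_twistedAntipode hσδ]
  set t := twistedAntipode δ
  calc
    _ = (ρ_ X).inv ≫ (t ⊗ₘ (σ ≫ t)) ≫ (β_ X X).hom ≫ μ[X] := by
      simp only [mulRight, Category.assoc, t, mul_comp_twistedAntipode,
        whiskerLeft_comp_tensorHom_assoc]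
    _ = (λ_ X).inv ≫ ((σ ≫ t) ⊗ₘ t) ≫ μ[X] := by
      rw [braiding_naturality_assoc, braiding_tensorUnit_right]; simp
    _ = _ := by
      rw [MonoidalCategory.tensorHom_def', Category.assoc, ← leftUnitor_inv_naturality_assoc,
        mulLeft]

lemma cyclicOp_twistedAntipode_cubed (hσδ : σ ≫ δ = 𝟙 _)
    (hinv : twistedAntipode δ ≫ twistedAntipode δ ≫ conj σ (σ ≫ 𝒮[X]) = 𝟙 X) :
    cyclicOp (twistedAntipode δ) (mulRight σ) ≫ cyclicOp (twistedAntipode δ) (mulRight σ) ≫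
        cyclicOp (twistedAntipode δ) (mulRight σ) =
      (β_ X X).hom ≫ (β_ X X).hom := by
  set t := twistedAntipode δ
  have sq_mulLeft : t ≫ t ≫ mulLeft (σ ≫ 𝒮[X]) = mulRight (σ ≫ 𝒮[X]) := by
    have := congrArg (· ≫ mulRight (σ ≫ 𝒮[X])) hinv
    simpa [conj, mulRight_comp_mulRight_of_mul_eq_one (grouplike_mul_antipode σ)] using this
  have sq_mulRight : t ≫ t ≫ mulRight σ = mulLeft σ := by
    have := congrArg (· ≫ mulLeft σ) hinv
    rw [conj, ← mulRight_comp_mulLeft] at this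
    simpa [mulLeft_comp_mulLeft_of_mul_eq_one (grouplike_mul_antipode σ)] using this
  have braiding_sq_mul : (β_ X X).hom ≫ (β_ X X).hom ≫ μ[X] = μ[X] :=
    braiding_comp_braiding_comp_mul (mul_comp_twistedAntipode δ)
      (mul_comp_conj (grouplike_mul_antipode σ)) hinv
  have comul_braiding_sq : Δ[X] ≫ (β_ X X).hom ≫ (β_ X X).hom = Δ[X] :=
    comul_comp_braiding_comp_braiding δ (conj_comp_comul σ (σ ≫ 𝒮[X])) hinv
  calc
    _ = galoisInv X ≫ (β_ X X).hom ≫ (β_ X X).hom ≫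
        (mulRight (σ ≫ 𝒮[X]) ⊗ₘ mulLeft σ) ≫ galois X ≫ mulRight σ ▷ X := by
      rw [cyclicOp_cubed (twistedAntipode_comp_comul δ) (mul_comp_twistedAntipode δ)
        (mul_comp_mulRight σ), mulRight_comp_twistedAntipode hσδ, sq_mulLeft, sq_mulRight]
    _ = (galoisInv X ≫ galois X) ≫ (β_ X X).hom ≫ (β_ X X).hom := by
      rw [galois_mulRight_tensor_mulLeft (antipode_mul_grouplike σ),
        braiding_comp_braiding_comp_galois braiding_sq_mul comul_braiding_sq, Category.assoc]
    _ = _ := by rw [galoisInv_comp_galois, Category.id_comp]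

end ModularPair

end Hopf

end BraidedHopf

namespace HopfObj

open MonObj ComonObj BraidedHopf

variable (A : _root_.HopfObj C) (δ : A.X ⟶ 𝟙_ C) (σ : 𝟙_ C ⟶ A.X)

/-- The structure of a Mathlib Hopf object on the underlying object of `A`. Mathlib states
coassociativity in the opposite direction and the bialgebra axiom through `tensorμ`. -/
abbrev hopfObj : CategoryTheory.HopfObj A.X where
  one := A.one
  mul := A.mul
  one_mul := A.one_mul
  mul_one := A.mul_one
  mul_assoc := A.mul_assoc
  counit := A.counit
  comul := A.comul
  counit_comul := A.counit_comul
  comul_counit := A.comul_counit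
  comul_assoc := A.comul_assoc.symm
  mul_comul := by simpa only [tensorμ, Category.assoc] using A.mul_comul
  one_comul := A.one_comul
  mul_counit := A.mul_counit
  one_counit := A.one_counit
  antipode := A.antipode
  antipode_left := A.antipode_left
  antipode_right := A.antipode_right

attribute [local instance] hopfObj ComonObj.instTensorUnit

variable {A δ σ} in
lemma IsCharacter.isMonHom (hδ : A.IsCharacter δ) : IsMonHom δ where
  one_hom := hδ.2
  mul_hom := hδ.1

variable {A δ σ} in
lemma IsCocharacter.isComonHom (hσ : A.IsCocharacter σ) : IsComonHom σ where
  hom_counit := hσ.2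
  hom_comul := hσ.1

lemma twist_eq_twistedAntipode : A.twist δ = twistedAntipode δ := by
  change A.comul ≫ (δ ⊗ₘ A.antipode) ≫ (λ_ A.X).hom =
    (A.comul ≫ δ ▷ A.X ≫ (λ_ A.X).hom) ≫ A.antipode
  rw [MonoidalCategory.tensorHom_def, Category.assoc, leftUnitor_naturality]
  simp only [Category.assoc]

lemma bmpiMap_eq :
    A.bmpiMap δ σ = A.twist δ ≫ A.twist δ ≫ conj σ (σ ≫ A.antipode) := by
  change (λ_ A.X).inv ≫ ((σ ≫ A.antipode) ⊗ₘ (A.twist δ ≫ A.twist δ)) ≫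
    (ρ_ (A.X ⊗ A.X)).inv ≫ ((A.X ⊗ A.X) ◁ σ) ≫ (A.mul ▷ A.X) ≫ A.mul =
    A.twist δ ≫ A.twist δ ≫ ((λ_ A.X).inv ≫ (σ ≫ A.antipode) ▷ A.X ≫ A.mul) ≫
      (ρ_ A.X).inv ≫ A.X ◁ σ ≫ A.mul
  rw [MonoidalCategory.tensorHom_def', whisker_exchange_assoc]
  simp

lemma tau2_eq_cyclicOp : A.tau2 δ σ = cyclicOp (A.twist δ) (mulRight σ) := by
  set t := A.twist δ
  let shuffle := (α_ A.X A.X A.X).hom ≫ A.X ◁ (β_ A.X A.X).hom ≫ (α_ A.X A.X A.X).inv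
  calc
    _ = (ρ_ (A.X ⊗ A.X)).inv ≫ (((t ≫ Δ) ▷ A.X ≫ shuffle) ⊗ₘ σ) ≫
        (α_ (A.X ⊗ A.X) A.X A.X).hom ≫ (μ ⊗ₘ μ) := by
      change (ρ_ (A.X ⊗ A.X)).inv ≫ (((t ≫ Δ) ⊗ₘ 𝟙 A.X) ⊗ₘ σ) ≫ shuffle ▷ A.X ≫
        (α_ (A.X ⊗ A.X) A.X A.X).hom ≫ (μ ⊗ₘ μ) = _
      rw [tensorHom_id, tensorHom_comp_whiskerRight_assoc]
    _ = (t ≫ Δ) ▷ A.X ≫ shuffle ≫ (μ ⊗ₘ mulRight σ) := by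
      rw [tensorHom_mulRight, MonoidalCategory.tensorHom_def, Category.assoc,
        ← rightUnitor_inv_naturality_assoc, Category.assoc]
    _ = _ := by
      simp only [shuffle, cyclicOp, braidedGalois, comp_whiskerRight, Category.assoc,
        MonoidalCategory.tensorHom_def]

end HopfObj

/-- For a braided modular pair in involution `(δ, σ)`,
`τ₂ ∘ τ₂ ∘ τ₂ = ψ_{H,H} ∘ ψ_{H,H}`. -/
theorem HopfObj.tau2_cubed (A : _root_.HopfObj C) (δ : A.X ⟶ 𝟙_ C) (σ : 𝟙_ C ⟶ A.X)
    (hδ : A.IsCharacter δ) (hσ : A.IsCocharacter σ) (hbmpi : A.IsBMPI δ σ) :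
    A.tau2 δ σ ≫ A.tau2 δ σ ≫ A.tau2 δ σ = (β_ A.X A.X).hom ≫ (β_ A.X A.X).hom := by
  let _ := A.hopfObj
  let _ := ComonObj.instTensorUnit C
  have := hδ.isMonHom
  have := hσ.isComonHom
  obtain ⟨hσδ, hinv⟩ := hbmpi
  rw [bmpiMap_eq, twist_eq_twistedAntipode] at hinv
  rw [tau2_eq_cyclicOp, twist_eq_twistedAntipode]
  exact BraidedHopf.cyclicOp_twistedAntipode_cubed hσδ hinv
end

section
/- Let H be a Hopf monoid in a braided monoidal category C (not assumed symmetric), and let (δ, σ) be a braided modular pair in involution for H. Then for every n ≥ 1 the (n+1)-fold composite τ_n ∘ ⋯ ∘ τ_n equals the n-fold composite Ψ_n ∘ ⋯ ∘ Ψ_n as endomorphisms of H^{⊗n}. -/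
open CategoryTheory MonoidalCategory

universe v u

variable {C : Type u} [Category.{v} C] [MonoidalCategory C] [BraidedCategory C]

/-- Tensor powers, with `H^{⊗0} = 𝟙`, `H^{⊗1} = H` and `H^{⊗(n+1)} = H^{⊗n} ⊗ H`. -/
def tensorPow (H : C) : ℕ → C
  | 0 => 𝟙_ C
  | 1 => H
  | n + 2 => tensorPow H (n + 1) ⊗ H

/-- The coherence isomorphism `H ⊗ H^{⊗n} ≅ H^{⊗(n+1)}`. -/
def tensorPowCons (H : C) : ∀ n : ℕ, H ⊗ tensorPow H n ≅ tensorPow H (n + 1)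
  | 0 => ρ_ H
  | 1 => Iso.refl (H ⊗ H)
  | n + 2 => (α_ H (tensorPow H (n + 1)) H).symm ≪≫
      whiskerRightIso (tensorPowCons H (n + 1)) H

/-- Iterated multiplication `m_{n+1}` of the braided tensor product algebra structure
on `H^{⊗(n+1)}`:  `m₁ = m` and
`m_{n+1} = (m_n ⊗ m) ∘ (1_{H^{⊗n}} ⊗ ψ_{H,H^{⊗n}} ⊗ 1_H)`. -/
def HopfObj.iterMul (A : _root_.HopfObj C) :
    ∀ n : ℕ, tensorPow A.X (n + 1) ⊗ tensorPow A.X (n + 1) ⟶ tensorPow A.X (n + 1)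
  | 0 => A.mul
  | n + 1 =>
      (α_ (tensorPow A.X (n + 1)) A.X (tensorPow A.X (n + 1) ⊗ A.X)).hom ≫
      (tensorPow A.X (n + 1) ◁ (α_ A.X (tensorPow A.X (n + 1)) A.X).inv) ≫
      (tensorPow A.X (n + 1) ◁ ((β_ A.X (tensorPow A.X (n + 1))).hom ▷ A.X)) ≫
      (tensorPow A.X (n + 1) ◁ (α_ (tensorPow A.X (n + 1)) A.X A.X).hom) ≫
      (α_ (tensorPow A.X (n + 1)) (tensorPow A.X (n + 1)) (A.X ⊗ A.X)).inv ≫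
      (HopfObj.iterMul A n ⊗ₘ A.mul)

/-- Iterated comultiplication `Δ⁰ = 1_H`, `Δⁿ = (1_H ⊗ Δ^{n-1}) ∘ Δ : H ⟶ H^{⊗(n+1)}`
(up to coherence isomorphisms). -/
def HopfObj.iterComul (A : _root_.HopfObj C) : ∀ n : ℕ, A.X ⟶ tensorPow A.X (n + 1)
  | 0 => 𝟙 A.X
  | n + 1 => A.comul ≫ (A.X ◁ HopfObj.iterComul A n) ≫ (tensorPowCons A.X (n + 1)).hom

/-- Appending `σ` as a last tensor factor, via `H^{⊗n} ≅ H^{⊗n} ⊗ 𝟙`. -/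
def tensorPowSnoc (H : C) (σ : 𝟙_ C ⟶ H) : ∀ n : ℕ, tensorPow H n ⟶ tensorPow H (n + 1)
  | 0 => σ
  | n + 1 => (ρ_ (tensorPow H (n + 1))).inv ≫ (tensorPow H (n + 1) ◁ σ)

/-- The cyclic operator `τ_{n+1} = m_{n+1} ∘ ((Δⁿ ∘ S̃) ⊗ 1_{H^{⊗n}} ⊗ σ)` on
`H^{⊗(n+1)}`, where the first tensor factor of `H^{⊗(n+1)} ≅ H ⊗ H^{⊗n}` is mapped by
`Δⁿ ∘ S̃` and `σ` is appended via `H^{⊗n} ≅ H^{⊗n} ⊗ 𝟙`. -/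
def HopfObj.cyclicOp (A : _root_.HopfObj C) (δ : A.X ⟶ 𝟙_ C) (σ : 𝟙_ C ⟶ A.X) (n : ℕ) :
    tensorPow A.X (n + 1) ⟶ tensorPow A.X (n + 1) :=
  (tensorPowCons A.X n).inv ≫
    ((A.twist δ ≫ A.iterComul n) ⊗ₘ tensorPowSnoc A.X σ n) ≫ A.iterMul n

/-- `Ψ_{n+1} : H^{⊗(n+1)} ⟶ H^{⊗(n+1)}`, the braiding `ψ_{H^{⊗n},H}` conjugated by the
coherence isomorphisms `H^{⊗(n+1)} ≅ H^{⊗n} ⊗ H` and `H ⊗ H^{⊗n} ≅ H^{⊗(n+1)}`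
(and `Ψ₁ = 1_H`). -/
def tensorPowBraid (H : C) : ∀ n : ℕ, tensorPow H (n + 1) ⟶ tensorPow H (n + 1)
  | 0 => 𝟙 H
  | n + 1 => (β_ (tensorPow H (n + 1)) H).hom ≫ (tensorPowCons H (n + 1)).hom

/-- The `n`-fold composite of an endomorphism. -/
def endoPow {X : C} (f : X ⟶ X) : ℕ → (X ⟶ X)
  | 0 => 𝟙 X
  | n + 1 => f ≫ endoPow f n

/-!
Send `h ⊗ x` in `H^{⊗(n+2)}` to `S̃(h) · x`, where `H` acts diagonally on `H^{⊗(n+1)}`. This map `p`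
is the quotient by the `δ`-twisted diagonal action on `H^{⊗(n+2)}`: `p (h · y) = δ(h) p(y)`.
Since `S̃²(h) σ = σ h`, the cyclic operator is induced along `p` by the rotation that braids the
first factor past all the others and then multiplies it by `σ`, so its `(n+2)`-nd power is induced
by the `(n+2)`-nd power of that decorated rotation. By the braid relations the latter is a full
twist of `n + 2` strands followed by multiplication by `σ` on every strand. The second operation is
the diagonal action of `σ`, which `p` does not see because `δ(σ) = 1`. Inserting the unit as a first
factor is a section of `p`, and the strand of the unit can be pulled out of the full twist, leaving
the full twist of `n + 1` strands; this is the `(n+1)`-st power of `Ψ_{n+1}`.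
-/

namespace BraidedCyclic

section BraidWords

variable {M M' : Type*} [Monoid M] [Monoid M']

/-- The ascending word `x 0 * x 1 * ⋯ * x (k - 1)`. -/
def asc (x : ℕ → M) (k : ℕ) : M := ((List.range k).map x).prod

/-- The descending word `x (k - 1) * ⋯ * x 1 * x 0`. -/
def desc (x : ℕ → M) (k : ℕ) : M := ((List.range k).map x).reverse.prod

@[simp] theorem asc_zero (x : ℕ → M) : asc x 0 = 1 := by simp [asc]

@[simp] theorem desc_zero (x : ℕ → M) : desc x 0 = 1 := by simp [desc]

theorem asc_succ (x : ℕ → M) (k : ℕ) : asc x (k + 1) = asc x k * x k := by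
  simp [asc, List.range_succ]

theorem asc_succ' (x : ℕ → M) (k : ℕ) : asc x (k + 1) = x 0 * asc (fun i => x (i + 1)) k := by
  simp [asc, List.range_succ_eq_map, Function.comp_def]

theorem desc_succ (x : ℕ → M) (k : ℕ) : desc x (k + 1) = x k * desc x k := by
  simp [desc, List.range_succ]

theorem desc_succ' (x : ℕ → M) (k : ℕ) : desc x (k + 1) = desc (fun i => x (i + 1)) k * x 0 := by
  simp [desc, List.range_succ_eq_map, Function.comp_def]

theorem asc_eq_map (F : M →* M') {x : ℕ → M} {y : ℕ → M'} {k : ℕ} (h : ∀ i < k, y i = F (x i)) :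
    asc y k = F (asc x k) := by
  rw [asc, asc, map_list_prod, List.map_map]
  exact congrArg List.prod (List.map_congr_left fun i hi => h i (List.mem_range.1 hi))

theorem desc_eq_map (F : M →* M') {x : ℕ → M} {y : ℕ → M'} {k : ℕ} (h : ∀ i < k, y i = F (x i)) :
    desc y k = F (desc x k) := by
  rw [desc, desc, map_list_prod, List.map_reverse, List.map_map]
  exact congrArg (fun l => l.reverse.prod)
    (List.map_congr_left fun i hi => h i (List.mem_range.1 hi))

theorem commute_asc {x : ℕ → M} {y : M} {k : ℕ} (h : ∀ i < k, Commute y (x i)) :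
    Commute y (asc x k) :=
  Commute.list_prod_right _ _ fun _ hz => by
    obtain ⟨i, hi, rfl⟩ := List.mem_map.1 hz
    exact h i (List.mem_range.1 hi)

theorem semiconjBy_desc {s : ℕ → M} {y z : M} {j k : ℕ} (hjk : j ≤ k)
    (hj : SemiconjBy (desc s j) y z) (h : ∀ i, j ≤ i → i < k → Commute (s i) z) :
    SemiconjBy (desc s k) y z := by
  induction k, hjk using Nat.le_induction with
  | base => exact hj
  | succ k hk ih =>
    rw [desc_succ]
    exact (h k hk (by omega)).semiconjBy.mul_left (ih fun i h₁ h₂ => h i h₁ (by omega))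

theorem semiconjBy_asc {s : ℕ → M} {y z : M} {j k : ℕ} (hjk : j ≤ k)
    (hj : SemiconjBy (asc s j) y z) (h : ∀ i, j ≤ i → i < k → Commute (s i) y) :
    SemiconjBy (asc s k) y z := by
  induction k, hjk using Nat.le_induction with
  | base => exact hj
  | succ k hk ih =>
    rw [asc_succ]
    exact (ih fun i h₁ h₂ => h i h₁ (by omega)).mul_left (h k hk (by omega))

/-- The relations of the braid group on the generators `s 0, …, s (N - 1)`. -/
structure BraidRel (s : ℕ → M) (N : ℕ) : Prop where
  far : ∀ i j, i + 2 ≤ j → j < N → Commute (s i) (s j)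
  braid : ∀ i, i + 1 < N → s i * s (i + 1) * s i = s (i + 1) * s i * s (i + 1)

/-- The relations between braid generators `s 0, …, s (N - 1)` and decorations `f 0, …, f N` of
the strands that may be pulled through crossings: `s i` carries the decoration of strand `i + 1`
to strand `i` and does not see the strands other than `i` and `i + 1`. -/
structure DecorationRel (s f : ℕ → M) (N : ℕ) : Prop where
  far : ∀ i j, i < N → j ≤ N → j ≠ i → j ≠ i + 1 → Commute (s i) (f j)
  near : ∀ i, i < N → SemiconjBy (s i) (f (i + 1)) (f i)

theorem BraidRel.semiconjBy_desc {s : ℕ → M} {N : ℕ} (hs : BraidRel s N) {i : ℕ}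
    (hi : i + 1 < N) : SemiconjBy (desc s N) (s (i + 1)) (s i) := by
  refine BraidedCyclic.semiconjBy_desc (j := i + 2) (by omega) ?_
    fun j hj hjN => (hs.far i j hj hjN).symm
  have hfar : SemiconjBy (desc s i) (s (i + 1)) (s (i + 1)) :=
    BraidedCyclic.semiconjBy_desc i.zero_le (by simp)
      fun j _ hj => hs.far j (i + 1) (by omega) hi
  rw [desc_succ, desc_succ, ← mul_assoc]
  refine SemiconjBy.mul_left ?_ hfar
  simpa only [SemiconjBy, mul_assoc] using (hs.braid i hi).symm

theorem BraidRel.semiconjBy_asc {s : ℕ → M} {N : ℕ} (hs : BraidRel s N) {i : ℕ}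
    (hi : i + 1 < N) : SemiconjBy (asc s N) (s i) (s (i + 1)) := by
  refine BraidedCyclic.semiconjBy_asc (j := i + 2) (by omega) ?_
    fun j hj hjN => (hs.far i j hj hjN).symm
  have hfar : SemiconjBy (asc s i) (s (i + 1)) (s (i + 1)) :=
    BraidedCyclic.semiconjBy_asc i.zero_le (by simp)
      fun j _ hj => hs.far j (i + 1) (by omega) hi
  rw [asc_succ, asc_succ, mul_assoc]
  refine hfar.mul_left ?_
  simpa only [SemiconjBy, mul_assoc] using hs.braid i hi

theorem DecorationRel.semiconjBy_desc {s f : ℕ → M} {N : ℕ} (h : DecorationRel s f N) {i : ℕ}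
    (hi : i < N) : SemiconjBy (desc s N) (f (i + 1)) (f i) := by
  refine BraidedCyclic.semiconjBy_desc (j := i + 1) hi ?_
    fun j hj hjN => h.far j i hjN (by omega) (by omega) (by omega)
  have hfar : SemiconjBy (desc s i) (f (i + 1)) (f (i + 1)) :=
    BraidedCyclic.semiconjBy_desc i.zero_le (by simp)
      fun j _ hj => h.far j (i + 1) (by omega) hi (by omega) (by omega)
  rw [desc_succ]
  exact (h.near i hi).mul_left hfar

theorem semiconjBy_pow_last {x : ℕ → M} {c : M} {N : ℕ}
    (h : ∀ i < N, SemiconjBy c (x (i + 1)) (x i)) : SemiconjBy (c ^ N) (x N) (x 0) := by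
  induction N with
  | zero => simp
  | succ N ih =>
    rw [pow_succ]
    exact (ih fun i hi => h i (by omega)).mul_left (h N N.lt_succ_self)

theorem semiconjBy_pow_zero {x : ℕ → M} {c : M} {N : ℕ}
    (h : ∀ i < N, SemiconjBy c (x i) (x (i + 1))) : SemiconjBy (c ^ N) (x 0) (x N) := by
  induction N with
  | zero => simp
  | succ N ih =>
    rw [pow_succ']
    exact (h N N.lt_succ_self).mul_left (ih fun i hi => h i (by omega))

theorem mul_pow_eq_desc_mul_pow {x : ℕ → M} {c : M} {N : ℕ}
    (h : ∀ i < N, SemiconjBy c (x (i + 1)) (x i)) :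
    (x N * c) ^ (N + 1) = desc x (N + 1) * c ^ (N + 1) := by
  induction N generalizing x with
  | zero => simp [desc_succ]
  | succ N ih =>
    calc (x (N + 1) * c) ^ (N + 2)
        = desc (fun i => x (i + 1)) (N + 1) * (c ^ (N + 1) * x (N + 1)) * c := by
          rw [pow_succ, ih (x := fun i => x (i + 1)) fun i hi => h (i + 1) (by omega)]
          simp only [mul_assoc]
      _ = desc (fun i => x (i + 1)) (N + 1) * (x 0 * c ^ (N + 1)) * c := by
          rw [(semiconjBy_pow_last h).eq]
      _ = desc x (N + 2) * c ^ (N + 2) := by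
          rw [desc_succ' x, pow_succ c (N + 1)]
          simp only [mul_assoc]

theorem pow_eq_asc_mul_pow {x : ℕ → M} {c d : M} {N : ℕ} (hc : c = x N * d)
    (h : ∀ i < N, SemiconjBy c (x (i + 1)) (x i)) :
    c ^ (N + 1) = asc x (N + 1) * d ^ (N + 1) := by
  induction N generalizing x with
  | zero => simp [asc_succ, hc]
  | succ N ih =>
    calc c ^ (N + 2) = c ^ (N + 1) * x (N + 1) * d := by rw [pow_succ, mul_assoc, ← hc]
      _ = x 0 * c ^ (N + 1) * d := by rw [(semiconjBy_pow_last h).eq]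
      _ = asc x (N + 2) * d ^ (N + 2) := by
        rw [ih (x := fun i => x (i + 1)) hc fun i hi => h (i + 1) (by omega), asc_succ' x,
          pow_succ d (N + 1)]
        simp only [mul_assoc]

theorem pow_eq_pow_mul_desc {x : ℕ → M} {c d : M} {N : ℕ} (hc : c = d * x N)
    (h : ∀ i < N, SemiconjBy c (x i) (x (i + 1))) :
    c ^ (N + 1) = d ^ (N + 1) * desc x (N + 1) := by
  induction N generalizing x with
  | zero => simp [desc_succ, hc]
  | succ N ih =>
    calc c ^ (N + 2) = d * (x (N + 1) * c ^ (N + 1)) := by rw [pow_succ', ← mul_assoc, ← hc]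
      _ = d * (c ^ (N + 1) * x 0) := by rw [(semiconjBy_pow_zero h).eq]
      _ = d ^ (N + 2) * desc x (N + 2) := by
        rw [ih (x := fun i => x (i + 1)) hc fun i hi => h (i + 1) (by omega), desc_succ' x,
          pow_succ' d (N + 1)]
        simp only [mul_assoc]

theorem BraidRel.mono {s : ℕ → M} {k N : ℕ} (hs : BraidRel s N) (hk : k ≤ N) : BraidRel s k :=
  ⟨fun i j h₁ h₂ => hs.far i j h₁ (by omega), fun i hi => hs.braid i (by omega)⟩

theorem BraidRel.desc_pow {s : ℕ → M} {N : ℕ} (hs : BraidRel s (N + 1)) :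
    desc s (N + 1) ^ (N + 1) = asc s (N + 1) * desc s N ^ (N + 1) :=
  pow_eq_asc_mul_pow (desc_succ s N) fun _ hi => hs.semiconjBy_desc (by omega)

theorem BraidRel.asc_pow {s : ℕ → M} {N : ℕ} (hs : BraidRel s (N + 1)) :
    asc s (N + 1) ^ (N + 1) = asc s N ^ (N + 1) * desc s (N + 1) :=
  pow_eq_pow_mul_desc (asc_succ s N) fun _ hi => hs.semiconjBy_asc (by omega)

theorem BraidRel.commute_desc_mul_asc {s : ℕ → M} {N : ℕ} (hs : BraidRel s (N + 1)) :
    Commute (desc s (N + 1) * asc s (N + 1)) (asc s N) :=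
  commute_asc fun _ hi =>
    (hs.semiconjBy_desc (by omega)).mul_left (hs.semiconjBy_asc (by omega))

-- Both sides are the full twist on `N + 1` strands.
theorem BraidRel.desc_pow_eq_asc_pow {s : ℕ → M} {N : ℕ} (hs : BraidRel s N) :
    desc s N ^ (N + 1) = asc s N ^ (N + 1) := by
  induction N with
  | zero => simp
  | succ N ih =>
    calc desc s (N + 1) ^ (N + 2)
        = desc s (N + 1) * asc s (N + 1) * asc s N ^ (N + 1) := by
          rw [pow_succ', hs.desc_pow, ih (hs.mono N.le_succ), mul_assoc]
      _ = asc s N ^ (N + 1) * (desc s (N + 1) * asc s (N + 1)) :=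
          (hs.commute_desc_mul_asc.pow_right (N + 1)).eq
      _ = asc s (N + 1) ^ (N + 2) := by rw [← mul_assoc, ← hs.asc_pow, ← pow_succ]

theorem DecorationRel.mul_desc_pow {s f : ℕ → M} {N : ℕ} (h : DecorationRel s f N) :
    (f N * desc s N) ^ (N + 1) = desc f (N + 1) * desc s N ^ (N + 1) :=
  mul_pow_eq_desc_mul_pow fun _ hi => h.semiconjBy_desc hi

end BraidWords

section EndoPow

omit [MonoidalCategory C] [BraidedCategory C]

theorem endoPow_eq_pow {Y : C} (f : Y ⟶ Y) (n : ℕ) : endoPow f n = (End.of f) ^ n := by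
  induction n with
  | zero => rfl
  | succ n ih => rw [pow_succ, endoPow, ih]; rfl

theorem endoPow_comp_eq_comp_endoPow {Y Z : C} {f : Y ⟶ Y} {g : Z ⟶ Z} {p : Y ⟶ Z}
    (h : f ≫ p = p ≫ g) (n : ℕ) : endoPow f n ≫ p = p ≫ endoPow g n := by
  induction n with
  | zero => simp only [endoPow, Category.id_comp, Category.comp_id]
  | succ n ih => simp only [endoPow, Category.assoc, ih, reassoc_of% h]

end EndoPow

section Decorations

omit [BraidedCategory C]

variable (X : C)

/-- Adjoining a strand on the right to endomorphisms of `X^{⊗(n+1)}`. -/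
abbrev addStrand (n : ℕ) : End (tensorPow X (n + 1)) →* End (tensorPow X (n + 2)) :=
  (tensorRight X).mapEnd (tensorPow X (n + 1))

variable {X}

/-- The endomorphism `φ` acting on the factor `i` (counted from `0`) of `X^{⊗(n+1)}`. Indices
`i > n` carry junk values. -/
def onStrand (φ : X ⟶ X) : ∀ n : ℕ, ℕ → End (tensorPow X (n + 1))
  | 0, _ => φ
  | n + 1, i => if i = n + 1 then tensorPow X (n + 1) ◁ φ else addStrand X n (onStrand φ n i)

theorem onStrand_last (φ : X ⟶ X) (n : ℕ) :
    onStrand φ (n + 1) (n + 1) = tensorPow X (n + 1) ◁ φ := if_pos rfl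

theorem onStrand_of_le (φ : X ⟶ X) {n i : ℕ} (h : i ≤ n) :
    onStrand φ (n + 1) i = addStrand X n (onStrand φ n i) := if_neg (by omega)

theorem commute_addStrand_onStrand_last (φ : X ⟶ X) {n : ℕ} (f : End (tensorPow X (n + 1))) :
    Commute (addStrand X n f) (onStrand φ (n + 1) (n + 1)) := by
  rw [onStrand_last]
  exact whisker_exchange f φ

/-- `φ ⊗ ⋯ ⊗ φ` on `X^{⊗(n+1)}`. -/
def tensorPowMap (φ : X ⟶ X) : ∀ n : ℕ, tensorPow X (n + 1) ⟶ tensorPow X (n + 1)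
  | 0 => φ
  | n + 1 => tensorPowMap φ n ⊗ₘ φ

theorem desc_onStrand (φ : X ⟶ X) (n : ℕ) :
    desc (onStrand φ n) (n + 1) = tensorPowMap φ n := by
  induction n with
  | zero => exact (desc_succ _ _).trans (mul_one _)
  | succ n ih =>
    rw [desc_succ, desc_eq_map (addStrand X n) fun i hi => onStrand_of_le φ (by omega), ih,
      onStrand_last]
    exact (tensorHom_def (tensorPowMap φ n) φ).symm

end Decorations

section Strands

theorem BraidRel.snoc {M M' : Type*} [Monoid M] [Monoid M'] {s : ℕ → M} {t : ℕ → M'} {N : ℕ}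
    (hs : BraidRel s N) (F : M →* M') (ht : ∀ i < N, t i = F (s i))
    (hfar : ∀ i, i + 1 < N → Commute (t i) (t N))
    (hbraid : ∀ i, i + 1 = N → t i * t (i + 1) * t i = t (i + 1) * t i * t (i + 1)) :
    BraidRel t (N + 1) where
  far i j hij hj := by
    rcases Nat.lt_succ_iff_lt_or_eq.1 hj with hj | rfl
    · rw [ht i (by omega), ht j hj]
      exact (hs.far i j hij hj).map F
    · exact hfar i (by omega)
  braid i hi := by
    rcases Nat.lt_succ_iff_lt_or_eq.1 hi with hi | hi
    · rw [ht i (by omega), ht (i + 1) hi]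
      simp only [← map_mul, hs.braid i hi]
    · exact hbraid i hi

theorem DecorationRel.snoc {M M' : Type*} [Monoid M] [Monoid M'] {s f : ℕ → M} {t g : ℕ → M'}
    {N : ℕ} (h : DecorationRel s f N) (F : M →* M') (ht : ∀ i < N, t i = F (s i))
    (hg : ∀ j ≤ N, g j = F (f j)) (hlast : ∀ i < N, Commute (t i) (g (N + 1)))
    (hfar : ∀ j < N, Commute (t N) (g j)) (hnear : SemiconjBy (t N) (g (N + 1)) (g N)) :
    DecorationRel t g (N + 1) where
  far i j hi hj hji hji' := by
    rcases Nat.lt_succ_iff_lt_or_eq.1 hi with hi | rfl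
    · rcases Nat.le_succ_iff.1 hj with hj | rfl
      · rw [ht i hi, hg j hj]
        exact (h.far i j hi hj hji hji').map F
      · exact hlast i hi
    · exact hfar j (by omega)
  near i hi := by
    rcases Nat.lt_succ_iff_lt_or_eq.1 hi with hi | rfl
    · rw [ht i hi, hg i hi.le, hg (i + 1) hi]
      exact (h.near i hi).map F
    · exact hnear

/-- The self-braiding of `X` on the last two factors of `(Y ⊗ X) ⊗ X`. -/
def crossAfter (Y X : C) : (Y ⊗ X) ⊗ X ⟶ (Y ⊗ X) ⊗ X :=
  (α_ Y X X).hom ≫ Y ◁ (β_ X X).hom ≫ (α_ Y X X).inv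

theorem whiskerRight_crossAfter {Y Y' : C} (X : C) (f : Y ⟶ Y') :
    f ▷ X ▷ X ≫ crossAfter Y' X = crossAfter Y X ≫ f ▷ X ▷ X := by
  simp only [crossAfter, Category.assoc]
  rw [associator_naturality_left_assoc, ← whisker_exchange_assoc, ← associator_inv_naturality_left]

theorem whiskerLeft_crossAfter (Y : C) {X : C} (φ : X ⟶ X) :
    (Y ⊗ X) ◁ φ ≫ crossAfter Y X = crossAfter Y X ≫ (Y ◁ φ) ▷ X := by
  have h := congrArg (fun z => (α_ Y X X).hom ≫ Y ◁ z ≫ (α_ Y X X).inv)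
    (BraidedCategory.braiding_naturality_right X φ)
  calc _ = _ := by rw [crossAfter]; monoidal
    _ = _ := h
    _ = _ := by rw [crossAfter]; monoidal

theorem yang_baxter_crossAfter_self (X : C) :
    (β_ X X).hom ▷ X ≫ crossAfter X X ≫ (β_ X X).hom ▷ X =
      crossAfter X X ≫ (β_ X X).hom ▷ X ≫ crossAfter X X := by
  rw [← cancel_epi (α_ X X X).inv, ← cancel_mono (α_ X X X).hom]
  simpa [crossAfter] using BraidedCategory.yang_baxter X X X

theorem yang_baxter_crossAfter (Y X : C) :
    crossAfter Y X ▷ X ≫ crossAfter (Y ⊗ X) X ≫ crossAfter Y X ▷ X =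
      crossAfter (Y ⊗ X) X ≫ crossAfter Y X ▷ X ≫ crossAfter (Y ⊗ X) X := by
  have h := congrArg (fun z => (α_ (Y ⊗ X) X X).hom ≫ (α_ Y X (X ⊗ X)).hom ≫ Y ◁ z ≫
    (α_ Y X (X ⊗ X)).inv ≫ (α_ (Y ⊗ X) X X).inv) (BraidedCategory.yang_baxter X X X)
  simp only [crossAfter]
  calc _ = _ := by monoidal
    _ = _ := h
    _ = _ := by monoidal

variable (X : C)

/-- The braiding of the last two factors of `X^{⊗(n+2)}`. -/
def lastCrossing : ∀ n : ℕ, End (tensorPow X (n + 2))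
  | 0 => (β_ X X).hom
  | n + 1 => crossAfter (tensorPow X (n + 1)) X

/-- The braiding of the factors `i` and `i + 1` (counted from `0`) of `X^{⊗(n+1)}`. Indices
`i ≥ n` carry junk values. -/
def crossing : ∀ n : ℕ, ℕ → End (tensorPow X (n + 1))
  | 0, _ => 1
  | n + 1, i => if i = n then lastCrossing X n else addStrand X n (crossing n i)

variable {X}

theorem crossing_last (n : ℕ) : crossing X (n + 1) n = lastCrossing X n := if_pos rfl

theorem crossing_of_lt {n i : ℕ} (h : i < n) :
    crossing X (n + 1) i = addStrand X n (crossing X n i) := if_neg h.ne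

theorem commute_addStrand_addStrand_lastCrossing {n : ℕ} (f : End (tensorPow X (n + 1))) :
    Commute (addStrand X (n + 1) (addStrand X n f)) (lastCrossing X (n + 1)) :=
  (whiskerRight_crossAfter X f).symm

theorem lastCrossing_yang_baxter (n : ℕ) :
    addStrand X (n + 1) (lastCrossing X n) * lastCrossing X (n + 1) *
        addStrand X (n + 1) (lastCrossing X n) =
      lastCrossing X (n + 1) * addStrand X (n + 1) (lastCrossing X n) * lastCrossing X (n + 1) := by
  cases n with
  | zero => exact yang_baxter_crossAfter_self X
  | succ n => exact yang_baxter_crossAfter (tensorPow X (n + 1)) X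

theorem semiconjBy_lastCrossing_onStrand (φ : X ⟶ X) (n : ℕ) :
    SemiconjBy (lastCrossing X n) (onStrand φ (n + 1) (n + 1)) (onStrand φ (n + 1) n) := by
  rw [onStrand_last, onStrand_of_le φ le_rfl]
  cases n with
  | zero => exact BraidedCategory.braiding_naturality_right X φ
  | succ n =>
    rw [onStrand_last]
    exact whiskerLeft_crossAfter (tensorPow X (n + 1)) φ

theorem braidRel_crossing (n : ℕ) : BraidRel (crossing X n) n := by
  induction n with
  | zero => exact ⟨fun _ _ _ h => absurd h (by omega), fun _ h => absurd h (by omega)⟩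
  | succ n ih =>
    refine ih.snoc (addStrand X n) (fun i hi => crossing_of_lt hi) (fun i hi => ?_) ?_
    · obtain ⟨m, rfl⟩ : ∃ m, n = m + 1 := ⟨n - 1, by omega⟩
      rw [crossing_last, crossing_of_lt (by omega), crossing_of_lt (by omega)]
      exact commute_addStrand_addStrand_lastCrossing _
    · rintro i rfl
      rw [crossing_last, crossing_of_lt i.lt_succ_self, crossing_last]
      exact lastCrossing_yang_baxter i

theorem decorationRel_crossing_onStrand (φ : X ⟶ X) (n : ℕ) :
    DecorationRel (crossing X n) (onStrand φ n) n := by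
  induction n with
  | zero => exact ⟨fun _ _ h => absurd h (by omega), fun _ h => absurd h (by omega)⟩
  | succ n ih =>
    refine ih.snoc (addStrand X n) (fun i hi => crossing_of_lt hi)
      (fun j hj => onStrand_of_le φ hj) (fun i hi => ?_) (fun j hj => ?_) ?_
    · rw [crossing_of_lt hi]
      exact commute_addStrand_onStrand_last φ _
    · obtain ⟨m, rfl⟩ : ∃ m, n = m + 1 := ⟨n - 1, by omega⟩
      rw [crossing_last, onStrand_of_le φ hj.le, onStrand_of_le φ (by omega)]
      exact (commute_addStrand_addStrand_lastCrossing _).symm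
    · rw [crossing_last]
      exact semiconjBy_lastCrossing_onStrand φ n

variable (X) in
/-- The rotation of `X^{⊗(n+1)}` that braids the first factor past all the others; it is the
mirror image of `tensorPowBraid`, which braids the last factor to the front. -/
def tensorPowRot : ∀ n : ℕ, tensorPow X (n + 1) ⟶ tensorPow X (n + 1)
  | 0 => 𝟙 X
  | n + 1 => (tensorPowCons X (n + 1)).inv ≫ (β_ X (tensorPow X (n + 1))).hom

variable (X) in
theorem tensorPowRot_succ (n : ℕ) :
    tensorPowRot X (n + 1) = tensorPowRot X n ▷ X ≫ lastCrossing X n := by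
  cases n with
  | zero =>
    change 𝟙 (X ⊗ X) ≫ (β_ X X).hom = 𝟙 X ▷ X ≫ (β_ X X).hom
    simp
  | succ n =>
    change ((tensorPowCons X (n + 1)).inv ▷ X ≫ (α_ X (tensorPow X (n + 1)) X).hom) ≫
      (β_ X (tensorPow X (n + 1) ⊗ X)).hom =
      ((tensorPowCons X (n + 1)).inv ≫ (β_ X (tensorPow X (n + 1))).hom) ▷ X ≫
      crossAfter (tensorPow X (n + 1)) X
    simp [crossAfter, BraidedCategory.braiding_tensor_right_hom]

variable (X) in
theorem tensorPowBraid_succ (n : ℕ) :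
    tensorPowBraid X (n + 1) = lastCrossing X n ≫ tensorPowBraid X n ▷ X := by
  cases n with
  | zero =>
    change (β_ X X).hom ≫ 𝟙 (X ⊗ X) = (β_ X X).hom ≫ 𝟙 X ▷ X
    simp
  | succ n =>
    change (β_ (tensorPow X (n + 1) ⊗ X) X).hom ≫ ((α_ X (tensorPow X (n + 1)) X).inv ≫
      (tensorPowCons X (n + 1)).hom ▷ X) = crossAfter (tensorPow X (n + 1)) X ≫
      ((β_ (tensorPow X (n + 1)) X).hom ≫ (tensorPowCons X (n + 1)).hom) ▷ X
    simp [crossAfter, BraidedCategory.braiding_tensor_left_hom]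

theorem desc_crossing (n : ℕ) : desc (crossing X n) n = tensorPowRot X n := by
  induction n with
  | zero => exact desc_zero _
  | succ n ih =>
    rw [desc_succ, desc_eq_map (addStrand X n) fun i hi => crossing_of_lt hi, ih, crossing_last,
      tensorPowRot_succ]
    rfl

theorem asc_crossing (n : ℕ) : asc (crossing X n) n = tensorPowBraid X n := by
  induction n with
  | zero => exact asc_zero _
  | succ n ih =>
    rw [asc_succ, asc_eq_map (addStrand X n) fun i hi => crossing_of_lt hi, ih, crossing_last,
      tensorPowBraid_succ]
    rfl

theorem endoPow_tensorPowRot (n : ℕ) :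
    endoPow (tensorPowRot X n) (n + 1) = endoPow (tensorPowBraid X n) (n + 1) := by
  rw [endoPow_eq_pow, endoPow_eq_pow, ← desc_crossing, ← asc_crossing]
  exact (braidRel_crossing n).desc_pow_eq_asc_pow

theorem endoPow_tensorPowRot_succ (n : ℕ) :
    endoPow (tensorPowRot X (n + 1)) (n + 1) =
      endoPow (tensorPowRot X n) (n + 1) ▷ X ≫ tensorPowBraid X (n + 1) := by
  rw [endoPow_eq_pow, endoPow_eq_pow, ← desc_crossing, ← asc_crossing]
  refine (braidRel_crossing (n + 1)).desc_pow.trans ?_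
  rw [desc_eq_map (addStrand X n) fun i hi => crossing_of_lt hi, ← map_pow, desc_crossing]
  rfl

/-- The rotation of `X^{⊗(n+2)}` that braids the first factor past all the others and applies `φ`
to it. -/
def decoratedRot (φ : X ⟶ X) (n : ℕ) : tensorPow X (n + 2) ⟶ tensorPow X (n + 2) :=
  tensorPowRot X (n + 1) ≫ tensorPow X (n + 1) ◁ φ

theorem endoPow_decoratedRot (φ : X ⟶ X) (n : ℕ) :
    endoPow (decoratedRot φ n) (n + 2) =
      endoPow (tensorPowRot X (n + 1)) (n + 2) ≫ tensorPowMap φ (n + 1) := by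
  rw [endoPow_eq_pow, endoPow_eq_pow, ← desc_onStrand, ← desc_crossing]
  refine Eq.trans ?_ (decorationRel_crossing_onStrand φ (n + 1)).mul_desc_pow
  rw [onStrand_last, desc_crossing]
  rfl

end Strands

section InsertFactor

variable {X : C}

/-- Insertion of a point `u` of `X` as the first tensor factor; compare `tensorPowSnoc`. -/
def consPoint (u : 𝟙_ C ⟶ X) (n : ℕ) : tensorPow X n ⟶ tensorPow X (n + 1) :=
  (λ_ _).inv ≫ u ▷ _ ≫ (tensorPowCons X n).hom

theorem consPoint_tensorPowRot (u : 𝟙_ C ⟶ X) (n : ℕ) :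
    consPoint u (n + 1) ≫ tensorPowRot X (n + 1) = tensorPowSnoc X u (n + 1) := by
  change ((λ_ (tensorPow X (n + 1))).inv ≫ u ▷ tensorPow X (n + 1) ≫
      (tensorPowCons X (n + 1)).hom) ≫
    (tensorPowCons X (n + 1)).inv ≫ (β_ X (tensorPow X (n + 1))).hom =
    (ρ_ (tensorPow X (n + 1))).inv ≫ tensorPow X (n + 1) ◁ u
  simp only [Category.assoc, Iso.hom_inv_id_assoc, BraidedCategory.braiding_naturality_left,
    leftUnitor_inv_braiding_assoc]

omit [BraidedCategory C] in
theorem tensorPowSnoc_whiskerRight (u : 𝟙_ C ⟶ X) {n : ℕ}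
    (f : tensorPow X (n + 1) ⟶ tensorPow X (n + 1)) :
    tensorPowSnoc X u (n + 1) ≫ f ▷ X = f ≫ tensorPowSnoc X u (n + 1) := by
  change ((ρ_ (tensorPow X (n + 1))).inv ≫ tensorPow X (n + 1) ◁ u) ≫ f ▷ X =
    f ≫ (ρ_ (tensorPow X (n + 1))).inv ≫ tensorPow X (n + 1) ◁ u
  simp only [Category.assoc, whisker_exchange, rightUnitor_inv_naturality_assoc]

theorem tensorPowSnoc_tensorPowBraid (u : 𝟙_ C ⟶ X) (n : ℕ) :
    tensorPowSnoc X u (n + 1) ≫ tensorPowBraid X (n + 1) = consPoint u (n + 1) := by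
  change ((ρ_ (tensorPow X (n + 1))).inv ≫ tensorPow X (n + 1) ◁ u) ≫
      (β_ (tensorPow X (n + 1)) X).hom ≫ (tensorPowCons X (n + 1)).hom =
    (λ_ (tensorPow X (n + 1))).inv ≫ u ▷ tensorPow X (n + 1) ≫ (tensorPowCons X (n + 1)).hom
  simp only [Category.assoc, BraidedCategory.braiding_naturality_right_assoc,
    rightUnitor_inv_braiding_assoc]

theorem consPoint_endoPow_tensorPowRot (u : 𝟙_ C ⟶ X) (n : ℕ) :
    consPoint u (n + 1) ≫ endoPow (tensorPowRot X (n + 1)) (n + 2) =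
      endoPow (tensorPowRot X n) (n + 1) ≫ consPoint u (n + 1) :=
  calc
    _ = (consPoint u (n + 1) ≫ tensorPowRot X (n + 1)) ≫
          endoPow (tensorPowRot X (n + 1)) (n + 1) := (Category.assoc _ _ _).symm
    _ = tensorPowSnoc X u (n + 1) ≫ endoPow (tensorPowRot X n) (n + 1) ▷ X ≫
          tensorPowBraid X (n + 1) := by
        rw [consPoint_tensorPowRot, endoPow_tensorPowRot_succ]
        rfl
    _ = (tensorPowSnoc X u (n + 1) ≫ endoPow (tensorPowRot X n) (n + 1) ▷ X) ≫
          tensorPowBraid X (n + 1) := (Category.assoc _ _ _).symm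
    _ = endoPow (tensorPowRot X n) (n + 1) ≫ tensorPowSnoc X u (n + 1) ≫
          tensorPowBraid X (n + 1) := by
        rw [tensorPowSnoc_whiskerRight]
        exact Category.assoc _ _ _
    _ = _ := by rw [tensorPowSnoc_tensorPowBraid]

end InsertFactor

section Points

open scoped MonObj

variable {H M : C}

omit [BraidedCategory C]

/-- The action of the point `σ` of `H` on `M`, for an action `a` of `H`. -/
def pointAct (σ : 𝟙_ C ⟶ H) (a : H ⊗ M ⟶ M) : M ⟶ M := (λ_ M).inv ≫ σ ▷ M ≫ a

theorem pointAct_smul_comp [MonObj H] [ModObj H M] (g h : 𝟙_ C ⟶ H) :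
    pointAct g γ[H, M] ≫ pointAct h γ[H, M] =
      pointAct ((λ_ (𝟙_ C)).inv ≫ (h ⊗ₘ g) ≫ μ) γ[H, M] := by
  simp only [pointAct, comp_whiskerRight, Category.assoc, ModObj.mul_smul_self,
    MonoidalCategory.tensorHom_def']
  rw [leftUnitor_inv_naturality_assoc, whisker_exchange_assoc]
  simp

theorem pointAct_one [MonObj H] [ModObj H M] : pointAct η γ[H, M] = 𝟙 M := by
  rw [pointAct, ModObj.one_smul_self, Iso.inv_hom_id]

/-- Right multiplication by the point `σ`. -/
def mulRightPoint [MonObj H] (σ : 𝟙_ C ⟶ H) : H ⟶ H := (ρ_ H).inv ≫ H ◁ σ ≫ μ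

theorem whiskerLeft_mulRightPoint_mul [MonObj H] (σ : 𝟙_ C ⟶ H) :
    H ◁ mulRightPoint σ ≫ μ = μ ≫ mulRightPoint σ := by
  simp only [mulRightPoint, whiskerLeft_comp, Category.assoc, MonObj.mul_assoc_flip]
  rw [rightUnitor_inv_naturality_assoc, ← whisker_exchange_assoc]
  simp

theorem one_mulRightPoint [MonObj H] (σ : 𝟙_ C ⟶ H) : η ≫ mulRightPoint σ = σ := by
  rw [mulRightPoint, rightUnitor_inv_naturality_assoc, ← whisker_exchange_assoc, MonObj.one_mul,
    leftUnitor_naturality, unitors_equal, Iso.inv_hom_id_assoc]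

end Points

section DiagonalAction

open scoped MonObj ComonObj

theorem tensorμ_braiding_left (X Y Z W : C) :
    tensorμ X Y Z W ≫ (β_ X Z).hom ▷ (Y ⊗ W) ≫ (α_ Z X (Y ⊗ W)).hom ≫ Z ◁ (α_ X Y W).inv =
      (α_ (X ⊗ Y) Z W).inv ≫ (β_ (X ⊗ Y) Z).hom ▷ W ≫ (α_ Z (X ⊗ Y) W).hom := by
  rw [BraidedCategory.braiding_tensor_left_hom]
  simp only [tensorμ]
  monoidal

theorem whiskerLeft_braiding_tensorμ (X Y Z W : C) :
    (X ⊗ Y) ◁ (β_ Z W).hom ≫ tensorμ X Y W Z =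
      (α_ X Y (Z ⊗ W)).hom ≫ X ◁ (α_ Y Z W).inv ≫ X ◁ (β_ (Y ⊗ Z) W).hom ≫
        (α_ X W (Y ⊗ Z)).inv := by
  rw [BraidedCategory.braiding_tensor_left_hom]
  simp only [tensorμ]
  monoidal

variable {H M M' N K : C}

variable [ComonObj H]

/-- The diagonal action of `H` on `M ⊗ N` induced by actions `a` on `M` and `b` on `N`. -/
def diagAct (a : H ⊗ M ⟶ M) (b : H ⊗ N ⟶ N) : H ⊗ (M ⊗ N) ⟶ M ⊗ N :=
  Δ ▷ (M ⊗ N) ≫ tensorμ H H M N ≫ (a ⊗ₘ b)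

theorem whiskerLeft_whiskerRight_diagAct (f : M ⟶ M') {a : H ⊗ M ⟶ M} {a' : H ⊗ M' ⟶ M'}
    (b : H ⊗ N ⟶ N) (h : H ◁ f ≫ a' = a ≫ f) :
    H ◁ f ▷ N ≫ diagAct a' b = diagAct a b ≫ f ▷ N := by
  have natural := tensorμ_natural_right H H f (𝟙 N)
  rw [tensorHom_id, whiskerLeft_id] at natural
  rw [diagAct, diagAct, whisker_exchange_assoc, reassoc_of% natural, tensorHom_comp_tensorHom, h]
  simp [MonoidalCategory.tensorHom_def']

theorem diagAct_diagAct_left (a : H ⊗ M ⟶ M) (b : H ⊗ N ⟶ N) (c : H ⊗ K ⟶ K) :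
    diagAct (diagAct a b) c = (Δ ≫ Δ ▷ H) ▷ ((M ⊗ N) ⊗ K) ≫
      tensorμ (H ⊗ H) H (M ⊗ N) K ≫ (tensorμ H H M N ▷ (H ⊗ K)) ≫ ((a ⊗ₘ b) ⊗ₘ c) := by
  have natural := tensorμ_natural_left Δ[H] (𝟙 H) (M ⊗ N) K
  rw [id_whiskerRight, tensorHom_id] at natural
  rw [comp_whiskerRight_assoc, reassoc_of% natural, ← tensorHom_id (tensorμ H H M N),
    tensorHom_comp_tensorHom, tensorHom_comp_tensorHom, Category.id_comp, Category.id_comp]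
  rfl

theorem diagAct_diagAct_right (a : H ⊗ M ⟶ M) (b : H ⊗ N ⟶ N) (c : H ⊗ K ⟶ K) :
    diagAct a (diagAct b c) = (Δ ≫ H ◁ Δ) ▷ (M ⊗ (N ⊗ K)) ≫
      tensorμ H (H ⊗ H) M (N ⊗ K) ≫ ((H ⊗ M) ◁ tensorμ H H N K) ≫ (a ⊗ₘ (b ⊗ₘ c)) := by
  have natural := tensorμ_natural_left (𝟙 H) Δ[H] M (N ⊗ K)
  rw [id_whiskerRight, id_tensorHom] at natural
  rw [comp_whiskerRight_assoc, reassoc_of% natural, ← id_tensorHom _ (tensorμ H H N K),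
    tensorHom_comp_tensorHom, tensorHom_comp_tensorHom, Category.id_comp, Category.id_comp]
  rfl

theorem diagAct_associator (a : H ⊗ M ⟶ M) (b : H ⊗ N ⟶ N) (c : H ⊗ K ⟶ K) :
    diagAct (diagAct a b) c ≫ (α_ M N K).hom =
      H ◁ (α_ M N K).hom ≫ diagAct a (diagAct b c) := by
  have monoidal_assoc := associator_monoidal H H H M N K
  rw [diagAct_diagAct_left, diagAct_diagAct_right]
  simp only [Category.assoc, associator_naturality]
  rw [reassoc_of% monoidal_assoc, whisker_exchange_assoc,
    MonoidalCategory.tensorHom_def (α_ H H H).hom, Category.assoc, ← comp_whiskerRight_assoc,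
    Category.assoc, ComonObj.comul_assoc]

theorem pointAct_diagAct (σ : 𝟙_ C ⟶ H) (hσ : σ ≫ Δ = (λ_ (𝟙_ C)).inv ≫ (σ ⊗ₘ σ))
    (a : H ⊗ M ⟶ M) (b : H ⊗ N ⟶ N) :
    pointAct σ (diagAct a b) = (pointAct σ a ⊗ₘ pointAct σ b) := by
  rw [pointAct, diagAct, ← comp_whiskerRight_assoc, hσ, comp_whiskerRight_assoc,
    reassoc_of% tensorμ_natural_left σ σ M N, ← cancel_epi (λ_ (M ⊗ N)).hom,
    Iso.hom_inv_id_assoc, tensor_left_unitality M N]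
  simp only [pointAct, Category.assoc, tensorHom_comp_tensorHom, Iso.hom_inv_id_assoc]

/-- The map `h ⊗ m ↦ h₁ ⊗ m ⊗ G h₂`, with `h₂` braided past `m`. -/
def shear (G : H ⟶ H) (M : C) : H ⊗ M ⟶ H ⊗ (M ⊗ H) :=
  Δ ▷ M ≫ (α_ H H M).hom ≫ H ◁ ((β_ H M).hom ≫ M ◁ G)

theorem shear_counit (χ : H ⟶ 𝟙_ C) (G : H ⟶ H) (M : C) :
    shear G M ≫ χ ▷ (M ⊗ H) ≫ (λ_ (M ⊗ H)).hom =
      (β_ H M).hom ≫ M ◁ (Δ ≫ χ ▷ H ≫ (λ_ H).hom ≫ G) := by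
  rw [← BraidedCategory.braiding_naturality_left]
  simp only [shear, Category.assoc]
  rw [whisker_exchange_assoc, leftUnitor_naturality, ← BraidedCategory.braiding_naturality_left]
  simp

variable [MonObj H]

-- `h · (x ⊗ m) ↦ T (h₁ x) h₂ m = T x (T h₁ h₂) m = χ h (T x m)`
theorem diagAct_mul_antihom_smul [ModObj H M] {T : H ⟶ H} {χ : H ⟶ 𝟙_ C}
    (hmul : μ ≫ T = (T ⊗ₘ T) ≫ (β_ H H).hom ≫ μ) (hinv : Δ ≫ T ▷ H ≫ μ = χ ≫ η) :
    diagAct μ γ[H, M] ≫ T ▷ M ≫ γ[H, M] =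
      χ ▷ (H ⊗ M) ≫ (λ_ (H ⊗ M)).hom ≫ T ▷ M ≫ γ[H, M] := by
  calc
    _ = Δ ▷ (H ⊗ M) ≫ tensorμ H H H M ≫ (μ ≫ T) ▷ (H ⊗ M) ≫ H ◁ γ[H, M] ≫ γ[H, M] := by
        simp [diagAct, MonoidalCategory.tensorHom_def, whisker_exchange_assoc]
    _ = Δ ▷ (H ⊗ M) ≫ tensorμ H H H M ≫ (β_ H H).hom ▷ (H ⊗ M) ≫ (T ⊗ₘ T) ▷ (H ⊗ M) ≫
          (α_ H H (H ⊗ M)).hom ≫ H ◁ (H ◁ γ[H, M] ≫ γ[H, M]) ≫ γ[H, M] := by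
        rw [hmul, BraidedCategory.braiding_naturality_assoc]
        simp only [comp_whiskerRight, Category.assoc]
        rw [← whisker_exchange_assoc μ, ModObj.mul_smul_self]
        simp
    _ = Δ ▷ (H ⊗ M) ≫ (tensorμ H H H M ≫ (β_ H H).hom ▷ (H ⊗ M) ≫ (α_ H H (H ⊗ M)).hom ≫
          H ◁ (α_ H H M).inv) ≫ H ◁ ((T ▷ H ≫ μ) ▷ M ≫ γ[H, M]) ≫ T ▷ M ≫ γ[H, M] := by
        rw [ModObj.mul_smul_self_flip, whisker_exchange_assoc T]
        simp [MonoidalCategory.tensorHom_def]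
    _ = (α_ H H M).inv ≫ (β_ H H).hom ▷ M ≫ (α_ H H M).hom ≫
          H ◁ ((Δ ≫ T ▷ H ≫ μ) ▷ M ≫ γ[H, M]) ≫ T ▷ M ≫ γ[H, M] := by
        simp only [tensorμ_braiding_left, Category.assoc, associator_inv_naturality_left_assoc]
        rw [← comp_whiskerRight_assoc, BraidedCategory.braiding_naturality_left]
        simp
    _ = (α_ H H M).inv ≫ (χ ▷ H ≫ (β_ (𝟙_ C) H).hom) ▷ M ≫ (α_ H (𝟙_ C) M).hom ≫
          H ◁ (λ_ M).hom ≫ T ▷ M ≫ γ[H, M] := by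
        rw [hinv, BraidedCategory.braiding_naturality_left, ← ModObj.one_smul_self H M]
        simp
    _ = _ := by
        rw [braiding_tensorUnit_left]
        simp

theorem shear_diagAct_mul {G : H ⟶ H} {σ : 𝟙_ C ⟶ H} (hG : Δ ≫ H ◁ G ≫ μ = ε ≫ σ)
    (a : H ⊗ M ⟶ M) :
    shear G M ≫ diagAct a μ = a ≫ (ρ_ M).inv ≫ M ◁ σ := by
  have natural := tensorμ_natural_right H H (𝟙 M) G
  simp only [id_tensorHom, whiskerLeft_id] at natural
  calc
    _ = (Δ ≫ Δ ▷ H ≫ (α_ H H H).hom) ▷ M ≫ (α_ H (H ⊗ H) M).hom ≫ H ◁ (α_ H H M).hom ≫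
          (α_ H H (H ⊗ M)).inv ≫ ((H ⊗ H) ◁ (β_ H M).hom ≫ tensorμ H H M H) ≫
          (H ⊗ M) ◁ (H ◁ G) ≫ (a ⊗ₘ μ) := by
        simp only [shear, diagAct, whiskerLeft_comp, Category.assoc]
        rw [← reassoc_of% natural, whisker_exchange_assoc, whisker_exchange_assoc]
        simp
    _ = Δ ▷ M ≫ (α_ H H M).hom ≫ H ◁ (Δ ▷ M ≫ (β_ (H ⊗ H) M).hom) ≫
          (α_ H M (H ⊗ H)).inv ≫ (a ⊗ₘ (H ◁ G ≫ μ)) := by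
        rw [← ComonObj.comul_assoc, whiskerLeft_braiding_tensorμ]
        simp [-ComonObj.comul_assoc, -ComonObj.comul_assoc_assoc,
          MonoidalCategory.tensorHom_def']
    _ = Δ ▷ M ≫ (α_ H H M).hom ≫ H ◁ (β_ H M).hom ≫ (α_ H M H).inv ≫
          (a ⊗ₘ (Δ ≫ H ◁ G ≫ μ)) := by
        rw [BraidedCategory.braiding_naturality_left]
        simp [MonoidalCategory.tensorHom_def']
    _ = (Δ ≫ H ◁ ε) ▷ M ≫ (α_ H (𝟙_ C) M).hom ≫ H ◁ (β_ (𝟙_ C) M).hom ≫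
          (α_ H M (𝟙_ C)).inv ≫ (a ⊗ₘ σ) := by
        rw [hG, comp_whiskerRight_assoc, whisker_assoc]
        simp only [Category.assoc, Iso.inv_hom_id_assoc]
        rw [← whiskerLeft_comp_assoc, BraidedCategory.braiding_naturality_left]
        simp [MonoidalCategory.tensorHom_def']
    _ = _ := by
        rw [ComonObj.comul_counit, braiding_tensorUnit_left]
        simp [MonoidalCategory.tensorHom_def]

-- Precompose the coinvariance of `p` with the shear `h ⊗ m ↦ h₁ ⊗ m ⊗ G h₂`.
theorem smul_insert_eq_braiding {Z : C} {G : H ⟶ H} {σ : 𝟙_ C ⟶ H} {χ : H ⟶ 𝟙_ C}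
    (hG : Δ ≫ H ◁ G ≫ μ = ε ≫ σ) (a : H ⊗ M ⟶ M) (p : M ⊗ H ⟶ Z)
    (hp : diagAct a μ ≫ p = χ ▷ (M ⊗ H) ≫ (λ_ (M ⊗ H)).hom ≫ p) :
    a ≫ (ρ_ M).inv ≫ M ◁ σ ≫ p =
      (β_ H M).hom ≫ M ◁ (Δ ≫ χ ▷ H ≫ (λ_ H).hom ≫ G) ≫ p := by
  have sheared := congrArg (shear G M ≫ ·) hp
  simp only [reassoc_of% shear_diagAct_mul hG a, reassoc_of% shear_counit χ G M] at sheared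
  simpa only [Category.assoc] using sheared

end DiagonalAction

section DiagonalModule

open scoped MonObj ComonObj

variable {H M N : C} [BimonObj H]

theorem one_diagAct {a : H ⊗ M ⟶ M} {b : H ⊗ N ⟶ N} (ha : η ▷ M ≫ a = (λ_ M).hom)
    (hb : η ▷ N ≫ b = (λ_ N).hom) : η ▷ (M ⊗ N) ≫ diagAct a b = (λ_ (M ⊗ N)).hom := by
  rw [diagAct, ← comp_whiskerRight_assoc, Bimon.one_comul, comp_whiskerRight_assoc,
    reassoc_of% tensorμ_natural_left η η M N, tensorHom_comp_tensorHom, ha, hb,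
    tensor_left_unitality M N]

theorem mul_diagAct {a : H ⊗ M ⟶ M} {b : H ⊗ N ⟶ N}
    (ha : μ ▷ M ≫ a = (α_ H H M).hom ≫ H ◁ a ≫ a) (hb : μ ▷ N ≫ b = (α_ H H N).hom ≫ H ◁ b ≫ b) :
    μ ▷ (M ⊗ N) ≫ diagAct a b = (α_ H H (M ⊗ N)).hom ≫ H ◁ diagAct a b ≫ diagAct a b := by
  calc
    _ = (Δ[H] ⊗ₘ Δ[H]) ▷ (M ⊗ N) ≫ tensorμ H H H H ▷ (M ⊗ N) ≫
          ((μ[H] ⊗ₘ μ[H]) ▷ (M ⊗ N) ≫ tensorμ H H M N) ≫ (a ⊗ₘ b) := by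
        rw [diagAct, ← comp_whiskerRight_assoc, BimonObj.mul_comul]
        simp only [comp_whiskerRight, Category.assoc]
    _ = (Δ[H] ⊗ₘ Δ[H]) ▷ (M ⊗ N) ≫ tensorμ H H H H ▷ (M ⊗ N) ≫
          tensorμ (H ⊗ H) (H ⊗ H) M N ≫ (μ ▷ M ≫ a ⊗ₘ μ ▷ N ≫ b) := by
        rw [tensorμ_natural_left]
        simp only [Category.assoc, tensorHom_comp_tensorHom]
    _ = (Δ[H] ⊗ₘ Δ[H]) ▷ (M ⊗ N) ≫ (tensorμ H H H H ▷ (M ⊗ N) ≫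
          tensorμ (H ⊗ H) (H ⊗ H) M N ≫ ((α_ H H M).hom ⊗ₘ (α_ H H N).hom)) ≫
          (H ◁ a ⊗ₘ H ◁ b) ≫ (a ⊗ₘ b) := by
        rw [ha, hb]
        simp only [Category.assoc, tensorHom_comp_tensorHom]
    _ = (Δ[H] ⊗ₘ Δ[H]) ▷ (M ⊗ N) ≫ (α_ (H ⊗ H) (H ⊗ H) (M ⊗ N)).hom ≫
          (H ⊗ H) ◁ tensorμ H H M N ≫ ((H ⊗ H) ◁ (a ⊗ₘ b) ≫ tensorμ H H M N) ≫ (a ⊗ₘ b) := by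
        rw [tensor_associativity, tensorμ_natural_right]
        simp only [Category.assoc]
    _ = _ := by
        rw [MonoidalCategory.tensorHom_def]
        simp only [diagAct, comp_whiskerRight, Category.assoc, whiskerLeft_comp, whisker_assoc,
          associator_naturality_left_assoc, Iso.inv_hom_id_assoc]
        simp only [← whisker_exchange_assoc]

variable (H) in
/-- The diagonal action of `H` on `H^{⊗(n+1)}`. -/
def diagonalAction : ∀ n : ℕ, H ⊗ tensorPow H (n + 1) ⟶ tensorPow H (n + 1)
  | 0 => μ[H]
  | n + 1 => diagAct (diagonalAction n) μ[H]

theorem one_diagonalAction (n : ℕ) :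
    η ▷ tensorPow H (n + 1) ≫ diagonalAction H n = (λ_ (tensorPow H (n + 1))).hom := by
  induction n with
  | zero => exact MonObj.one_mul H
  | succ n ih => exact one_diagAct ih (MonObj.one_mul H)

theorem mul_diagonalAction (n : ℕ) :
    μ ▷ tensorPow H (n + 1) ≫ diagonalAction H n =
      (α_ H H (tensorPow H (n + 1))).hom ≫ H ◁ diagonalAction H n ≫ diagonalAction H n := by
  induction n with
  | zero => exact MonObj.mul_assoc H
  | succ n ih => exact mul_diagAct ih (MonObj.mul_assoc H)

instance diagonalModObj (n : ℕ) : ModObj H (tensorPow H (n + 1)) where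
  smul := diagonalAction H n
  one_smul := one_diagonalAction n
  mul_smul := mul_diagonalAction n

theorem whiskerLeft_tensorPowCons_diagonalAction (n : ℕ) :
    H ◁ (tensorPowCons H (n + 1)).hom ≫ diagonalAction H (n + 1) =
      diagAct μ (diagonalAction H n) ≫ (tensorPowCons H (n + 1)).hom := by
  induction n with
  | zero =>
    change H ◁ 𝟙 (H ⊗ H) ≫ diagAct μ μ = diagAct μ μ ≫ 𝟙 (H ⊗ H)
    rw [whiskerLeft_id, Category.id_comp, Category.comp_id]
  | succ n ih =>
    let c := (tensorPowCons H (n + 1)).hom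
    let Q := tensorPow H (n + 1)
    have diag_assoc : H ◁ (α_ H Q H).inv ≫ diagAct (diagAct μ (diagonalAction H n)) μ =
        diagAct μ (diagAct (diagonalAction H n) μ) ≫ (α_ H Q H).inv := by
      rw [Iso.eq_comp_inv, Category.assoc, diagAct_associator, ← whiskerLeft_comp_assoc,
        Iso.inv_hom_id, whiskerLeft_id, Category.id_comp]
    change H ◁ ((α_ H Q H).inv ≫ c ▷ H) ≫ diagAct (diagonalAction H (n + 1)) μ =
      diagAct μ (diagAct (diagonalAction H n) μ) ≫ (α_ H Q H).inv ≫ c ▷ H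
    rw [whiskerLeft_comp, Category.assoc, whiskerLeft_whiskerRight_diagAct c μ ih,
      reassoc_of% diag_assoc]

theorem pointAct_diagonalAction {σ : 𝟙_ C ⟶ H} (hσ : σ ≫ Δ = (λ_ (𝟙_ C)).inv ≫ (σ ⊗ₘ σ)) (n : ℕ) :
    pointAct σ (diagonalAction H n) = tensorPowMap (pointAct σ μ) n := by
  induction n with
  | zero => rfl
  | succ n ih =>
    change pointAct σ (diagAct (diagonalAction H n) μ) = (tensorPowMap (pointAct σ μ) n ⊗ₘ _)
    rw [pointAct_diagAct σ hσ, ih]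

end DiagonalModule

section TwistedAntipode

open scoped MonObj ComonObj CategoryTheory.HopfObj

variable {H : C} [CategoryTheory.HopfObj H] {χ : H ⟶ 𝟙_ C} {σ : 𝟙_ C ⟶ H}

/-- The antipode twisted by `χ`; compare `HopfObj.twist`. -/
def twistedAntipode (χ : H ⟶ 𝟙_ C) : H ⟶ H := Δ ≫ (χ ⊗ₘ 𝒮) ≫ (λ_ H).hom

theorem one_twistedAntipode (hχ : η ≫ χ = 𝟙 (𝟙_ C)) : η ≫ twistedAntipode χ = η := by
  rw [twistedAntipode, Bimon.one_comul_assoc, tensorHom_comp_tensorHom_assoc, hχ,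
    CategoryTheory.HopfObj.one_antipode, id_tensorHom, leftUnitor_naturality,
    Iso.inv_hom_id_assoc]

theorem mul_twistedAntipode (hχ : μ ≫ χ = (χ ⊗ₘ χ) ≫ (λ_ (𝟙_ C)).hom) :
    μ ≫ twistedAntipode χ = (twistedAntipode χ ⊗ₘ twistedAntipode χ) ≫ (β_ H H).hom ≫ μ := by
  calc
    _ = (Δ ⊗ₘ Δ) ≫ tensorμ H H H H ≫ ((χ ⊗ₘ χ) ≫ (λ_ (𝟙_ C)).hom ⊗ₘ
          (𝒮 ⊗ₘ 𝒮) ≫ (β_ H H).hom ≫ μ) ≫ (λ_ H).hom := by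
        rw [twistedAntipode, BimonObj.mul_comul_assoc, tensorHom_comp_tensorHom_assoc, hχ,
          CategoryTheory.HopfObj.mul_antipode]
    _ = (Δ ⊗ₘ Δ) ≫ (tensorμ H H H H ≫ ((χ ⊗ₘ χ) ⊗ₘ (𝒮 ⊗ₘ 𝒮))) ≫
          (λ_ (𝟙_ C)).hom ▷ (H ⊗ H) ≫ (λ_ (H ⊗ H)).hom ≫ (β_ H H).hom ≫ μ := by
        simp [MonoidalCategory.tensorHom_def, whisker_exchange_assoc]
    _ = _ := by
        rw [← tensorμ_natural, Category.assoc, ← leftUnitor_monoidal_assoc]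
        simp only [tensorHom_comp_tensorHom_assoc, twistedAntipode]

theorem comul_twistedAntipode_mul (χ : H ⟶ 𝟙_ C) : Δ ≫ twistedAntipode χ ▷ H ≫ μ = χ ≫ η := by
  calc
    _ = (Δ ≫ Δ ▷ H ≫ (α_ H H H).hom) ≫ χ ▷ (H ⊗ H) ≫ (λ_ (H ⊗ H)).hom ≫ 𝒮 ▷ H ≫ μ := by
        simp [twistedAntipode, MonoidalCategory.tensorHom_def, -ComonObj.comul_assoc,
          -ComonObj.comul_assoc_assoc]
    _ = Δ ≫ χ ▷ H ≫ (λ_ H).hom ≫ Δ ≫ 𝒮 ▷ H ≫ μ := by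
        rw [← ComonObj.comul_assoc, Category.assoc, whisker_exchange_assoc,
          leftUnitor_naturality_assoc]
    _ = (Δ ≫ H ◁ ε) ≫ χ ▷ 𝟙_ C ≫ (λ_ (𝟙_ C)).hom ≫ η := by
        rw [CategoryTheory.HopfObj.antipode_left, Category.assoc, whisker_exchange_assoc,
          leftUnitor_naturality_assoc]
    _ = _ := by
        rw [ComonObj.comul_counit, unitors_equal, rightUnitor_naturality_assoc,
          Iso.inv_hom_id_assoc]

theorem comul_antipode_mulRightPoint_mul (σ : 𝟙_ C ⟶ H) :
    Δ ≫ H ◁ (𝒮 ≫ mulRightPoint σ) ≫ μ = ε ≫ σ := by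
  rw [whiskerLeft_comp_assoc, whiskerLeft_mulRightPoint_mul,
    CategoryTheory.HopfObj.antipode_right_assoc, one_mulRightPoint]

theorem pointAct_antipode_comp_pointAct {M : C} [ModObj H M]
    (hσ : σ ≫ Δ = (λ_ (𝟙_ C)).inv ≫ (σ ⊗ₘ σ)) (hσε : σ ≫ ε = 𝟙 (𝟙_ C)) :
    pointAct (σ ≫ 𝒮) γ[H, M] ≫ pointAct σ γ[H, M] = 𝟙 M := by
  have inverse : (λ_ (𝟙_ C)).inv ≫ (σ ⊗ₘ (σ ≫ 𝒮)) ≫ μ = η :=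
    calc
      _ = σ ≫ Δ ≫ H ◁ 𝒮 ≫ μ := by
          rw [reassoc_of% hσ, ← id_tensorHom, tensorHom_comp_tensorHom_assoc, Category.comp_id]
      _ = η := by rw [CategoryTheory.HopfObj.antipode_right, reassoc_of% hσε]
  rw [pointAct_smul_comp, inverse, pointAct_one]

variable (χ) in
/-- The quotient map `h ⊗ x ↦ S̃(h) · x` of `H^{⊗(n+2)}` onto its coinvariants for the diagonal
action twisted by `χ`, which are identified with `H^{⊗(n+1)}`. -/
def coinvProj (n : ℕ) : tensorPow H (n + 2) ⟶ tensorPow H (n + 1) :=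
  (tensorPowCons H (n + 1)).inv ≫ twistedAntipode χ ▷ _ ≫ diagonalAction H n

theorem diagonalAction_coinvProj (hχ : μ ≫ χ = (χ ⊗ₘ χ) ≫ (λ_ (𝟙_ C)).hom) (n : ℕ) :
    diagonalAction H (n + 1) ≫ coinvProj χ n = χ ▷ _ ≫ (λ_ _).hom ≫ coinvProj χ n := by
  have cons_inv : diagonalAction H (n + 1) ≫ (tensorPowCons H (n + 1)).inv =
      H ◁ (tensorPowCons H (n + 1)).inv ≫ diagAct μ (diagonalAction H n) := by
    rw [Iso.comp_inv_eq, Category.assoc, ← whiskerLeft_tensorPowCons_diagonalAction,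
      ← whiskerLeft_comp_assoc, Iso.inv_hom_id, whiskerLeft_id, Category.id_comp]
  have coinvariant := diagAct_mul_antihom_smul (M := tensorPow H (n + 1))
    (mul_twistedAntipode hχ) (comul_twistedAntipode_mul χ)
  change diagAct μ (diagonalAction H n) ≫ twistedAntipode χ ▷ _ ≫ diagonalAction H n =
    χ ▷ _ ≫ (λ_ _).hom ≫ twistedAntipode χ ▷ _ ≫ diagonalAction H n at coinvariant
  rw [coinvProj, reassoc_of% cons_inv, coinvariant, whisker_exchange_assoc,
    leftUnitor_naturality_assoc]

theorem consPoint_one_coinvProj (hχ : η ≫ χ = 𝟙 (𝟙_ C)) (n : ℕ) :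
    consPoint η (n + 1) ≫ coinvProj χ n = 𝟙 (tensorPow H (n + 1)) := by
  simp only [consPoint, coinvProj, Category.assoc, Iso.hom_inv_id_assoc]
  rw [← comp_whiskerRight_assoc, one_twistedAntipode hχ, one_diagonalAction, Iso.inv_hom_id]

theorem tensorPowMap_pointAct_coinvProj (hχ : μ ≫ χ = (χ ⊗ₘ χ) ≫ (λ_ (𝟙_ C)).hom)
    (hσ : σ ≫ Δ = (λ_ (𝟙_ C)).inv ≫ (σ ⊗ₘ σ)) (hχσ : σ ≫ χ = 𝟙 (𝟙_ C)) (n : ℕ) :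
    tensorPowMap (pointAct σ μ) (n + 1) ≫ coinvProj χ n = coinvProj χ n := by
  rw [← pointAct_diagonalAction hσ, pointAct, Category.assoc, Category.assoc,
    diagonalAction_coinvProj hχ, ← comp_whiskerRight_assoc, hχσ, id_whiskerRight,
    Category.id_comp, Iso.inv_hom_id_assoc]

theorem decoratedRot_coinvProj (hχ : μ ≫ χ = (χ ⊗ₘ χ) ≫ (λ_ (𝟙_ C)).hom) (σ : 𝟙_ C ⟶ H) (n : ℕ) :
    decoratedRot (twistedAntipode χ ≫ twistedAntipode χ ≫ mulRightPoint σ) n ≫ coinvProj χ n =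
      coinvProj χ n ≫ tensorPowSnoc H σ (n + 1) ≫ coinvProj χ n := by
  let Q := tensorPow H (n + 1)
  let c : tensorPow H (n + 2) ⟶ H ⊗ Q := (tensorPowCons H (n + 1)).inv
  let p : Q ⊗ H ⟶ Q := coinvProj χ n
  have twist_eq : Δ ≫ χ ▷ H ≫ (λ_ H).hom ≫ 𝒮 ≫ mulRightPoint σ =
      twistedAntipode χ ≫ mulRightPoint σ := by
    simp [twistedAntipode, MonoidalCategory.tensorHom_def]
  have insert_eq := smul_insert_eq_braiding (comul_antipode_mulRightPoint_mul σ)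
    (diagonalAction H n) p (diagonalAction_coinvProj hχ n)
  rw [twist_eq] at insert_eq
  change ((c ≫ (β_ H Q).hom) ≫ Q ◁ (twistedAntipode χ ≫ twistedAntipode χ ≫ mulRightPoint σ)) ≫ p =
    (c ≫ twistedAntipode χ ▷ Q ≫ diagonalAction H n) ≫ ((ρ_ Q).inv ≫ Q ◁ σ) ≫ p
  simp only [Category.assoc]
  rw [insert_eq, BraidedCategory.braiding_naturality_left_assoc, ← whiskerLeft_comp_assoc]

end TwistedAntipode

section CyclicOperator

open scoped MonObj ComonObj CategoryTheory.HopfObj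

variable (A : _root_.HopfObj C)

instance instHopfObjX : CategoryTheory.HopfObj A.X where
  one := A.one
  mul := A.mul
  one_mul := A.one_mul
  mul_one := A.mul_one
  mul_assoc := A.mul_assoc
  counit := A.counit
  comul := A.comul
  counit_comul := A.counit_comul
  comul_counit := A.comul_counit
  comul_assoc := A.comul_assoc.symm
  mul_comul := by
    rw [A.mul_comul]
    simp only [tensorμ, Category.assoc]
  one_comul := A.one_comul
  mul_counit := A.mul_counit
  one_counit := A.one_counit
  antipode := A.antipode
  antipode_left := A.antipode_left
  antipode_right := A.antipode_right

theorem iterComul_succ (n : ℕ) : A.iterComul (n + 1) = Δ[A.X] ≫ A.iterComul n ▷ A.X := by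
  induction n with
  | zero =>
    change Δ[A.X] ≫ A.X ◁ 𝟙 A.X ≫ 𝟙 (A.X ⊗ A.X) = Δ[A.X] ≫ 𝟙 A.X ▷ A.X
    rw [whiskerLeft_id, id_whiskerRight, Category.comp_id]
  | succ n ih =>
    let c := (tensorPowCons A.X (n + 1)).hom
    let i : A.X ⟶ tensorPow A.X (n + 1) := A.iterComul n
    calc
      _ = Δ ≫ A.X ◁ (Δ ≫ i ▷ A.X) ≫ (α_ A.X (tensorPow A.X (n + 1)) A.X).inv ≫ c ▷ A.X := by
          rw [← ih]
          rfl
      _ = (Δ ≫ A.X ◁ Δ) ≫ (α_ A.X A.X A.X).inv ≫ (A.X ◁ i ≫ c) ▷ A.X := by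
          simp [-ComonObj.comul_assoc, -ComonObj.comul_assoc_assoc]
      _ = Δ ≫ (Δ ≫ A.X ◁ i ≫ c) ▷ A.X := by
          rw [ComonObj.comul_assoc]
          simp
      _ = _ := rfl

theorem iterMul_succ (n : ℕ) :
    A.iterMul (n + 1) = tensorμ (tensorPow A.X (n + 1)) A.X (tensorPow A.X (n + 1)) A.X ≫
      (A.iterMul n ⊗ₘ μ[A.X]) := by
  simp only [tensorμ, Category.assoc]
  rfl

theorem iterComul_whiskerRight_iterMul (n : ℕ) :
    A.iterComul n ▷ tensorPow A.X (n + 1) ≫ A.iterMul n = diagonalAction A.X n := by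
  induction n with
  | zero =>
    change 𝟙 A.X ▷ A.X ≫ μ[A.X] = μ[A.X]
    rw [id_whiskerRight, Category.id_comp]
  | succ n ih =>
    let Q := tensorPow A.X (n + 1)
    let i : A.X ⟶ Q := A.iterComul n
    have natural := tensorμ_natural_left i (𝟙 A.X) Q A.X
    rw [tensorHom_id, id_whiskerRight] at natural
    rw [iterComul_succ, iterMul_succ]
    change (Δ[A.X] ≫ i ▷ A.X) ▷ (Q ⊗ A.X) ≫ tensorμ Q A.X Q A.X ≫ (A.iterMul n ⊗ₘ μ[A.X]) =
      diagAct (diagonalAction A.X n) μ[A.X]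
    rw [comp_whiskerRight_assoc, reassoc_of% natural, tensorHom_comp_tensorHom, ih,
      Category.id_comp, diagAct]

theorem cyclicOp_eq_tensorPowSnoc_coinvProj (δ : A.X ⟶ 𝟙_ C) (σ : 𝟙_ C ⟶ A.X) (n : ℕ) :
    A.cyclicOp δ σ n = tensorPowSnoc A.X σ (n + 1) ≫ coinvProj δ n := by
  rw [coinvProj, ← iterComul_whiskerRight_iterMul]
  cases n with
  | zero =>
    change (ρ_ A.X).inv ≫ ((A.twist δ ≫ 𝟙 A.X) ⊗ₘ σ) ≫ A.mul = ((ρ_ A.X).inv ≫ A.X ◁ σ) ≫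
      𝟙 (A.X ⊗ A.X) ≫ A.twist δ ▷ A.X ≫ 𝟙 A.X ▷ A.X ≫ A.mul
    simp [MonoidalCategory.tensorHom_def']
  | succ n =>
    let Q := tensorPow A.X (n + 1)
    let Q' := tensorPow A.X (n + 2)
    let c : Q' ⟶ A.X ⊗ Q := (tensorPowCons A.X (n + 1)).inv
    let i : A.X ⟶ Q' := A.iterComul (n + 1)
    let m : Q' ⊗ Q ⊗ A.X ⟶ Q' := A.iterMul (n + 1)
    change c ≫ ((A.twist δ ≫ i) ⊗ₘ ((ρ_ Q).inv ≫ Q ◁ σ)) ≫ m =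
      ((ρ_ Q').inv ≫ Q' ◁ σ) ≫ (c ▷ A.X ≫ (α_ A.X Q A.X).hom) ≫
        A.twist δ ▷ (Q ⊗ A.X) ≫ i ▷ (Q ⊗ A.X) ≫ m
    simp only [Category.assoc]
    rw [whisker_exchange_assoc, ← rightUnitor_inv_naturality_assoc]
    simp [MonoidalCategory.tensorHom_def']

theorem bmpiMap_eq (δ : A.X ⟶ 𝟙_ C) (σ : 𝟙_ C ⟶ A.X) :
    A.bmpiMap δ σ = (twistedAntipode δ ≫ twistedAntipode δ ≫ mulRightPoint σ) ≫
      pointAct (σ ≫ 𝒮) μ := by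
  calc
    _ = twistedAntipode δ ≫ twistedAntipode δ ≫ (λ_ A.X).inv ≫ (σ ≫ 𝒮) ▷ A.X ≫ μ ≫
          mulRightPoint σ := by
        change (λ_ A.X).inv ≫ ((σ ≫ 𝒮) ⊗ₘ (twistedAntipode δ ≫ twistedAntipode δ)) ≫
          (ρ_ (A.X ⊗ A.X)).inv ≫ (A.X ⊗ A.X) ◁ σ ≫ μ ▷ A.X ≫ μ = _
        rw [mulRightPoint, MonoidalCategory.tensorHom_def']
        simp only [Category.assoc]
        rw [← leftUnitor_inv_naturality_assoc, whisker_exchange_assoc,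
          rightUnitor_inv_naturality_assoc μ]
        simp only [Category.assoc]
    _ = _ := by
        rw [← whiskerLeft_mulRightPoint_mul, ← whisker_exchange_assoc,
          ← leftUnitor_inv_naturality_assoc, pointAct]
        simp only [Category.assoc]

variable {A} {δ : A.X ⟶ 𝟙_ C} {σ : 𝟙_ C ⟶ A.X}

-- The condition reads `S(σ) S̃²(h) σ = h`; multiply by `σ` on the left.
theorem twistedAntipode_twistedAntipode_mulRightPoint (hσ : A.IsCocharacter σ)
    (hbmpi : A.IsBMPI δ σ) :
    twistedAntipode δ ≫ twistedAntipode δ ≫ mulRightPoint σ = pointAct σ μ := by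
  have cancel : pointAct (σ ≫ 𝒮) μ[A.X] ≫ pointAct σ μ[A.X] = 𝟙 A.X :=
    let _ := ModObj.regular A.X
    pointAct_antipode_comp_pointAct hσ.1 hσ.2
  have involution := congrArg (· ≫ pointAct σ μ[A.X]) ((bmpiMap_eq A δ σ).symm.trans hbmpi.2)
  simpa only [Category.assoc, cancel, Category.comp_id, Category.id_comp] using involution

theorem decoratedRot_pointAct_coinvProj (hδ : A.IsCharacter δ) (hσ : A.IsCocharacter σ)
    (hbmpi : A.IsBMPI δ σ) (n : ℕ) :
    decoratedRot (pointAct σ μ[A.X]) n ≫ coinvProj δ n = coinvProj δ n ≫ A.cyclicOp δ σ n := by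
  rw [← twistedAntipode_twistedAntipode_mulRightPoint hσ hbmpi,
    cyclicOp_eq_tensorPowSnoc_coinvProj]
  exact decoratedRot_coinvProj hδ.1 σ n

end CyclicOperator

end BraidedCyclic

open BraidedCyclic

/-- For a braided modular pair in involution `(δ, σ)` and every
`n ≥ 1`, the `(n+1)`-fold composite of `τ_n` equals the `n`-fold composite of `Ψ_n`
(here stated for `τ_{n+1}` and `Ψ_{n+1}`, for all `n : ℕ`). -/
theorem HopfObj.cyclicOp_pow_eq_braid_pow (A : _root_.HopfObj C)
    (δ : A.X ⟶ 𝟙_ C) (σ : 𝟙_ C ⟶ A.X)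
    (hδ : A.IsCharacter δ) (hσ : A.IsCocharacter σ) (hbmpi : A.IsBMPI δ σ) :
    ∀ n : ℕ, endoPow (A.cyclicOp δ σ n) (n + 2) =
      endoPow (tensorPowBraid A.X n) (n + 1) := by
  intro n
  have intertwine := decoratedRot_pointAct_coinvProj hδ hσ hbmpi n
  have section_eq : consPoint A.one (n + 1) ≫ coinvProj δ n = 𝟙 (tensorPow A.X (n + 1)) :=
    consPoint_one_coinvProj hδ.2 n
  calc
    _ = consPoint A.one (n + 1) ≫ coinvProj δ n ≫ endoPow (A.cyclicOp δ σ n) (n + 2) := by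
        rw [reassoc_of% section_eq]
    _ = consPoint A.one (n + 1) ≫ endoPow (tensorPowRot A.X (n + 1)) (n + 2) ≫
          coinvProj δ n := by
        rw [← endoPow_comp_eq_comp_endoPow intertwine, endoPow_decoratedRot, Category.assoc,
          tensorPowMap_pointAct_coinvProj hδ.1 hσ.1 hbmpi.1]
    _ = endoPow (tensorPowRot A.X n) (n + 1) ≫ consPoint A.one (n + 1) ≫ coinvProj δ n := by
        rw [← Category.assoc, consPoint_endoPow_tensorPowRot, Category.assoc]
    _ = endoPow (tensorPowBraid A.X n) (n + 1) := by
        rw [section_eq, Category.comp_id, endoPow_tensorPowRot]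
end
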